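/- arXiv:2105.08984 — 7 statements merged into one kernel-verified Lean document; each statement's English description precedes it below -/
import Mathlib

section
/- Let V be a finite-dimensional vector space over a field K and let X be a nilpotent endomorphism of V having exactly b_k Jordan blocks of size k for 1 ≤ k ≤ q (equivalently, dim ker(X^p) = Σ_{k=1}^q min(k,p)·b_k for all p ≥ 0). Let c_1, …, c_q be nonnegative integers satisfying c_q + c_{q−1} + ⋯ + c_p ≤ b_q + b_{q−1} + ⋯ + b_p for every 1 ≤ p ≤ q. Then there exists a subspace L ⊆ V with X(L) ⊆ L such that the restriction X_L of X to L has exactly c_k Jordan blocks of size k for each k, i.e. dim ker(X_L^p) = Σ_{k=1}^q min(k,p)·c_k for all p ≥ 0; in particular dim L = Σ_{k=1}^q k·c_k. -/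
section JordanHelpers
open Finset

theorem jt_sum_tail (q : ℕ) (b : ℕ → ℕ) (p : ℕ) :
    ∑ k ∈ Icc 1 q, min k p * b k = ∑ i ∈ range p, ∑ k ∈ Icc (i + 1) q, b k := by
  induction p with
  | zero => simp
  | succ p ih =>
    rw [sum_range_succ, ← ih]
    have h : Icc (p + 1) q = (Icc 1 q).filter (fun k => p + 1 ≤ k) := by
      ext k; simp only [mem_Icc, mem_filter]; omega
    rw [h, sum_filter, ← sum_add_distrib]
    refine sum_congr rfl fun k _ => ?_
    split_ifs with hk
    · rw [min_eq_right hk, min_eq_right (by omega)]; ring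
    · rw [min_eq_left (by omega), min_eq_left (by omega)]; ring

variable {K : Type*} [Field K] {V : Type*} [AddCommGroup V] [Module K V] [FiniteDimensional K V]

theorem jt_finrank_inf_ker (N : Submodule K V) (f : V →ₗ[K] K) (v : V) (hv : v ∈ N)
    (hf : f v ≠ 0) :
    Module.finrank K (N ⊓ LinearMap.ker f : Submodule K V) + 1 = Module.finrank K N := by
  have h1 := (f.domRestrict N).finrank_range_add_finrank_ker
  have h2 : LinearMap.range (f.domRestrict N) = ⊤ := by
    apply LinearMap.range_eq_top.2
    apply LinearMap.surjective
    intro h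
    exact hf (by simpa using LinearMap.congr_fun h ⟨v, hv⟩)
  have h3 : Module.finrank K (LinearMap.ker (f.domRestrict N)) =
      Module.finrank K (N ⊓ LinearMap.ker f : Submodule K V) := by
    rw [LinearMap.ker_domRestrict, ← Submodule.map_comap_subtype,
      Submodule.finrank_map_subtype_eq]
  rw [h2, finrank_top, Module.finrank_self, h3] at h1
  omega

theorem jt_finrank_map (X : Module.End K V) (N : Submodule K V) :
    Module.finrank K (N.map X) + Module.finrank K (N ⊓ LinearMap.ker X : Submodule K V)
      = Module.finrank K N := by
  have h1 := (X.domRestrict N).finrank_range_add_finrank_ker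
  rw [LinearMap.range_domRestrict, LinearMap.ker_domRestrict] at h1
  rw [← Submodule.map_comap_subtype, Submodule.finrank_map_subtype_eq]
  exact h1

theorem jt_step (X : Module.End K V) (M : Submodule K V) (hM : ∀ x ∈ M, X x ∈ M)
    (B : ℕ → ℕ)
    (hB : ∀ p, Module.finrank K (LinearMap.ker (X ^ p) ⊓ M : Submodule K V) =
      ∑ i ∈ range p, B i) (k : ℕ) (hk : B (k + 1) < B k) :
    ∃ M' : Submodule K V, (∀ x ∈ M', X x ∈ M') ∧
      ∀ p, Module.finrank K (LinearMap.ker (X ^ p) ⊓ M' : Submodule K V) =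
      ∑ i ∈ range p, (Function.update B k (B k - 1)) i := by
  set N : ℕ → Submodule K V := fun p => LinearMap.ker (X ^ p) ⊓ M with hN
  have hmem : ∀ p x, x ∈ N p ↔ (X ^ p) x = 0 ∧ x ∈ M := by
    intro p x; simp [hN]
  have hmono : ∀ {a b}, a ≤ b → N a ≤ N b := by
    intro a b hab x hx
    rw [hmem] at hx ⊢
    refine ⟨?_, hx.2⟩
    obtain ⟨d, rfl⟩ := Nat.exists_eq_add_of_le hab
    rw [add_comm, pow_add, Module.End.mul_apply, hx.1, map_zero]
  have hnot : ¬ N (k + 1) ≤ N k ⊔ M.map X := by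
    intro hle
    have hle2 : N (k + 1) ≤ N k ⊔ (N (k + 2)).map X := by
      intro x hx
      obtain ⟨y, hy, z, hz, rfl⟩ := Submodule.mem_sup.1 (hle hx)
      obtain ⟨w, hw, rfl⟩ := hz
      refine Submodule.add_mem_sup hy (Submodule.mem_map_of_mem ?_)
      rw [hmem]
      refine ⟨?_, hw⟩
      have h1 : X w ∈ N (k + 1) := by
        have := (N (k+1)).sub_mem hx (hmono (Nat.le_succ k) hy)
        simpa using this
      have h2 := ((hmem _ _).1 h1).1
      rw [pow_succ, Module.End.mul_apply]
      exact h2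
    have hle3 : (N (k + 1)).map X ≤ N k ⊓ (N (k + 2)).map X := by
      refine le_inf ?_ (Submodule.map_mono (hmono (Nat.le_succ _)))
      rintro _ ⟨w, hw, rfl⟩
      have := (hmem _ _).1 hw
      rw [hmem]
      refine ⟨?_, hM _ this.2⟩
      have h2 := this.1
      rwa [pow_succ, Module.End.mul_apply] at h2
    have hk1 : ∀ p, N (p + 1) ⊓ LinearMap.ker X = N 1 := by
      intro p
      ext x
      have h1 : x ∈ N 1 → x ∈ N (p + 1) := fun h => hmono (by omega) h
      rw [Submodule.mem_inf, LinearMap.mem_ker]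
      constructor
      · rintro ⟨h2, h3⟩
        rw [hmem] at h2 ⊢
        exact ⟨by simpa using h3, h2.2⟩
      · intro h
        exact ⟨h1 h, by simpa using ((hmem _ _).1 h).1⟩
    have e1 := jt_finrank_map X (N (k + 1))
    have e2 := jt_finrank_map X (N (k + 2))
    rw [hk1] at e1 e2
    have e3 := Submodule.finrank_sup_add_finrank_inf_eq (N k) ((N (k + 2)).map X)
    have e4 := Submodule.finrank_mono hle2
    have e5 := Submodule.finrank_mono hle3
    have f0 := hB k
    have f1 := hB (k + 1)
    have f2 := hB (k + 2)
    rw [sum_range_succ] at f1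
    rw [sum_range_succ, sum_range_succ] at f2
    change Module.finrank K (N k) = _ at f0
    change Module.finrank K (N (k + 1)) = _ at f1
    change Module.finrank K (N (k + 2)) = _ at f2
    omega
  obtain ⟨v, hv, hvW⟩ := SetLike.not_le_iff_exists.1 hnot
  obtain ⟨f, hfv, hf⟩ := Submodule.exists_le_ker_of_notMem hvW
  refine ⟨M ⊓ LinearMap.ker f, ?_, ?_⟩
  · intro x hx
    exact ⟨hM _ hx.1, hf (Submodule.mem_sup_right (Submodule.mem_map_of_mem hx.1))⟩
  · intro p
    rw [← inf_assoc]
    change Module.finrank K (N p ⊓ LinearMap.ker f : Submodule K V) = _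
    have hp : Module.finrank K (N p) = _ := hB p
    by_cases hkp : k < p
    · have h1 := jt_finrank_inf_ker (N p) f v (hmono hkp hv) hfv
      have h2 := sum_update_of_mem (mem_range.2 hkp) B (B k - 1)
      have h3 := add_sum_erase (range p) B (mem_range.2 hkp)
      rw [← sdiff_singleton_eq_erase] at h3
      omega
    · have h1 : N p ⊓ LinearMap.ker f = N p :=
        inf_eq_left.2 ((hmono (by omega)).trans (le_sup_left.trans hf))
      rw [h1, hp, sum_update_of_notMem (by simpa using hkp)]

theorem jt_main (X : Module.End K V) (q : ℕ) (C : ℕ → ℕ) (hC : Antitone C) (n : ℕ) :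
    ∀ (M : Submodule K V) (_ : ∀ x ∈ M, X x ∈ M) (B : ℕ → ℕ)
    (_ : ∀ p, Module.finrank K (LinearMap.ker (X ^ p) ⊓ M : Submodule K V) =
      ∑ i ∈ range p, B i) (_ : ∀ i, C i ≤ B i) (_ : ∀ i, q ≤ i → B i = 0)
    (_ : ∑ i ∈ range q, B i = n),
    ∃ L : Submodule K V, (∀ x ∈ L, X x ∈ L) ∧
      ∀ p, Module.finrank K (LinearMap.ker (X ^ p) ⊓ L : Submodule K V) =
      ∑ i ∈ range p, C i := by
  induction n with
  | zero =>
    intro M hM B hB hCB hq hn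
    refine ⟨M, hM, fun p => ?_⟩
    rw [hB]
    refine sum_congr rfl fun i _ => ?_
    have : B i = 0 := by
      by_cases h : q ≤ i
      · exact hq i h
      · exact (sum_eq_zero_iff.1 hn) i (by simpa using h)
    have := hCB i
    omega
  | succ n ih =>
    intro M hM B hB hCB hq hn
    by_cases h : ∀ i, B i = C i
    · exact ⟨M, hM, fun p => by rw [hB]; exact sum_congr rfl fun i _ => h i⟩
    · obtain ⟨i0, hi0⟩ := not_forall.1 h
      obtain ⟨k, hk, hk2⟩ : ∃ k, C k < B k ∧ B (k + 1) = C (k + 1) := by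
        by_contra! hcon
        have : ∀ d, C (i0 + d) < B (i0 + d) := by
          intro d
          induction d with
          | zero => exact lt_of_le_of_ne (hCB _) (Ne.symm hi0)
          | succ d ihd =>
            exact lt_of_le_of_ne (hCB _) (Ne.symm (hcon _ ihd))
        have h1 := this q
        rw [hq _ (by omega)] at h1
        omega
      have hkq : k < q := by
        by_contra hh
        rw [hq k (by omega)] at hk
        omega
      have hck := hC (Nat.le_succ k)
      obtain ⟨M', hM', hB'⟩ := jt_step X M hM B hB k (by rw [hk2]; exact lt_of_le_of_lt hck hk)
      refine ih M' hM' _ hB' ?_ ?_ ?_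
      · intro i
        by_cases hi : i = k
        · subst hi; simp; omega
        · simpa [hi] using hCB i
      · intro i hi
        rw [Function.update_of_ne (by omega)]
        exact hq i hi
      · have h2 := sum_update_of_mem (mem_range.2 hkq) B (B k - 1)
        have h3 := add_sum_erase (range q) B (mem_range.2 hkq)
        rw [← sdiff_singleton_eq_erase] at h3
        omega

end JordanHelpers


open Finset in
/-- Existence of invariant subspaces of prescribed Jordan type: if a nilpotent endomorphism
`X` has `b k` Jordan blocks of size `k` for `1 ≤ k ≤ q`, and nonnegative integers `c k`
satisfy `c q + ⋯ + c p ≤ b q + ⋯ + b p` for all `1 ≤ p ≤ q`, then there is an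
`X`-invariant subspace `L` on which `X` restricts with exactly `c k` Jordan blocks of
size `k`; in particular `dim L = ∑ k, k * c k`. -/
theorem exists_invariant_subspace_of_jordan_type
    (K : Type*) [Field K] (V : Type*) [AddCommGroup V] [Module K V]
    [FiniteDimensional K V] (X : Module.End K V) (hX : IsNilpotent X)
    (q : ℕ) (b c : ℕ → ℕ)
    (hb : ∀ p : ℕ, Module.finrank K (LinearMap.ker (X ^ p)) =
      ∑ k ∈ Icc 1 q, min k p * b k)
    (hc : ∀ p ∈ Icc 1 q, ∑ k ∈ Icc p q, c k ≤ ∑ k ∈ Icc p q, b k) :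
    ∃ L : Submodule K V, ∃ hL : ∀ x ∈ L, X x ∈ L,
      (∀ p : ℕ, Module.finrank K (LinearMap.ker ((X.restrict hL) ^ p)) =
        ∑ k ∈ Icc 1 q, min k p * c k) ∧
      Module.finrank K L = ∑ k ∈ Icc 1 q, k * c k := by
  obtain ⟨L, hL, h⟩ := jt_main X q (fun i => ∑ k ∈ Icc (i + 1) q, c k)
    (fun i j hij => sum_le_sum_of_subset (Icc_subset_Icc_left (by omega))) _ ⊤
    (fun _ _ => Submodule.mem_top) (fun i => ∑ k ∈ Icc (i + 1) q, b k)
    (fun p => by rw [inf_top_eq, hb, jt_sum_tail])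
    (fun i => by
      by_cases hi : i + 1 ≤ q
      · exact hc _ (mem_Icc.2 ⟨by omega, hi⟩)
      · simp [Icc_eq_empty hi])
    (fun i hi => by simp [Icc_eq_empty (show ¬ i + 1 ≤ q by omega)]) rfl
  refine ⟨L, hL, fun p => ?_, ?_⟩
  · rw [jt_sum_tail, ← h, Module.End.pow_restrict, LinearMap.ker_restrict,
      inf_comm, ← Submodule.map_comap_subtype,
      Submodule.finrank_map_subtype_eq]
  · obtain ⟨N, hN⟩ := hX
    have h1 := h (N + q)
    rw [← jt_sum_tail, pow_add, hN, zero_mul, LinearMap.ker_zero, top_inf_eq] at h1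
    rw [h1]
    refine sum_congr rfl fun k hk => ?_
    rw [min_eq_left (by have := (mem_Icc.1 hk).2; omega)]
end

section
/- Let U and V be finite-dimensional complex vector spaces of dimensions u and v with u ≥ v ≥ 1. Let X be a regular nilpotent endomorphism of U and Y a regular nilpotent endomorphism of V, and let Z be the endomorphism of U ⊗ V given by Z = X ⊗ id_V + id_U ⊗ Y. Then Z is nilpotent with exactly v Jordan blocks, of sizes u−v+1, u−v+3, …, u+v−3, u+v−1; equivalently, for every p ≥ 0, dim ker(Z^p) = Σ_{j=1}^{v} min(p, u−v−1+2j). -/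
lemma jt_strings_li {W ι : Type*} [AddCommGroup W] [Module ℂ W] [Fintype ι] (Z : Module.End ℂ W)
    (s : ι → ℕ) (w : ι → W) (h0 : ∀ i, (Z ^ (s i)) (w i) = 0)
    (hli : LinearIndependent ℂ (fun i => (Z ^ (s i - 1)) (w i))) :
    LinearIndependent ℂ (fun x : (Σ i, Fin (s i)) => (Z ^ (x.2 : ℕ)) (w x.1)) := by
  classical
  rw [Fintype.linearIndependent_iff] at hli ⊢
  intro g hg
  by_contra hne
  push Not at hne
  obtain ⟨y, hy⟩ := hne
  obtain ⟨x0, hx0, hmax⟩ := Finset.exists_max_image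
    (Finset.univ.filter (fun x : (Σ i, Fin (s i)) => g x ≠ 0)) (fun x => s x.1 - (x.2 : ℕ))
    ⟨y, by simpa using hy⟩
  simp only [Finset.mem_filter, Finset.mem_univ, true_and] at hx0 hmax
  obtain ⟨r, hr⟩ : ∃ r, s x0.1 - (x0.2 : ℕ) = r + 1 := ⟨s x0.1 - x0.2 - 1, by have := x0.2.2; omega⟩
  rw [hr] at hmax
  have hz : ∀ i k, s i ≤ k → (Z ^ k) (w i) = 0 := by
    intro i k hk
    obtain ⟨d, rfl⟩ := Nat.exists_eq_add_of_le hk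
    rw [add_comm, pow_add, Module.End.mul_apply, h0, map_zero]
  have h1 := congrArg (Z ^ r) hg
  rw [map_sum, map_zero, Fintype.sum_sigma] at h1
  have h2 : ∀ i, ∑ k : Fin (s i), (Z ^ r) (g ⟨i, k⟩ • (Z ^ (k : ℕ)) (w i)) =
      (if h : r < s i then g ⟨i, ⟨s i - 1 - r, by omega⟩⟩ else 0) • (Z ^ (s i - 1)) (w i) := by
    intro i
    have h3 : ∀ k : Fin (s i), s i - 1 - r ≠ k ∨ s i ≤ r →
        (Z ^ r) (g ⟨i, k⟩ • (Z ^ (k : ℕ)) (w i)) = 0 := by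
      intro k hk
      rw [map_smul, ← Module.End.mul_apply, ← pow_add]
      by_cases hk2 : s i ≤ r + k
      · rw [hz i _ hk2, smul_zero]
      · have : g ⟨i, k⟩ = 0 := by
          by_contra hgk
          have := hmax ⟨i, k⟩ hgk
          simp only at this
          omega
        rw [this, zero_smul]
    split_ifs with h
    · rw [Finset.sum_eq_single (⟨s i - 1 - r, by omega⟩ : Fin (s i))]
      · rw [map_smul, ← Module.End.mul_apply, ← pow_add]
        congr 3
        simp only
        omega
      · intro k _ hk
        exact h3 k (Or.inl fun h => hk (Fin.ext h.symm))
      · simp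
    · rw [zero_smul]
      exact Finset.sum_eq_zero fun k _ => h3 k (Or.inr (by omega))
  simp only [h2] at h1
  have h4 := hli _ h1 x0.1
  have hlt : r < s x0.1 := by omega
  rw [dif_pos hlt] at h4
  apply hx0
  rw [← h4]
  congr 1
  refine Sigma.ext rfl (heq_of_eq (Fin.ext ?_))
  simp only
  have := x0.2.2
  omega

lemma jt_ker {W ι : Type*} [AddCommGroup W] [Module ℂ W] [FiniteDimensional ℂ W] [Fintype ι]
    (Z : Module.End ℂ W)
    (s : ι → ℕ) (w : ι → W) (h0 : ∀ i, (Z ^ (s i)) (w i) = 0)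
    (hli : LinearIndependent ℂ (fun i => (Z ^ (s i - 1)) (w i)))
    (hN : ∑ i, s i = Module.finrank ℂ W) (p : ℕ) :
    Module.finrank ℂ (LinearMap.ker (Z ^ p)) = ∑ i, min p (s i) := by
  have hz : ∀ i k, s i ≤ k → (Z ^ k) (w i) = 0 := by
    intro i k hk
    obtain ⟨d, rfl⟩ := Nat.exists_eq_add_of_le hk
    rw [add_comm, pow_add, Module.End.mul_apply, h0, map_zero]
  have L := jt_strings_li Z s w h0 hli
  have hk : ∑ i, min p (s i) ≤ Module.finrank ℂ (LinearMap.ker (Z ^ p)) := by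
    let f : (Σ i, Fin (min p (s i))) → LinearMap.ker (Z ^ p) := fun x =>
      ⟨(Z ^ (s x.1 - min p (s x.1) + x.2)) (w x.1), by
        rw [LinearMap.mem_ker, ← Module.End.mul_apply, ← pow_add]
        exact hz _ _ (by omega)⟩
    have hf : LinearIndependent ℂ f := by
      apply LinearIndependent.of_comp (LinearMap.ker (Z ^ p)).subtype
      refine L.comp (fun x : (Σ i, Fin (min p (s i))) =>
        (⟨x.1, ⟨s x.1 - min p (s x.1) + x.2, by have := x.2.2; omega⟩⟩ : Σ i, Fin (s i))) ?_
      rintro ⟨i, k⟩ ⟨i', k'⟩ h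
      obtain rfl : i = i' := congrArg Sigma.fst h
      simp only [Sigma.mk.injEq, heq_eq_eq, Fin.mk.injEq, true_and] at h ⊢
      exact Fin.ext (by omega)
    simpa using hf.fintype_card_le_finrank
  have hr : ∑ i, (s i - p) ≤ Module.finrank ℂ (LinearMap.range (Z ^ p)) := by
    let f : (Σ i, Fin (s i - p)) → LinearMap.range (Z ^ p) := fun x =>
      ⟨(Z ^ (p + x.2)) (w x.1), by
        rw [pow_add, Module.End.mul_apply]
        exact LinearMap.mem_range_self _ _⟩
    have hf : LinearIndependent ℂ f := by
      apply LinearIndependent.of_comp (LinearMap.range (Z ^ p)).subtype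
      refine L.comp (fun x : (Σ i, Fin (s i - p)) =>
        (⟨x.1, ⟨p + x.2, by have := x.2.2; omega⟩⟩ : Σ i, Fin (s i))) ?_
      rintro ⟨i, k⟩ ⟨i', k'⟩ h
      obtain rfl : i = i' := congrArg Sigma.fst h
      simp only [Sigma.mk.injEq, heq_eq_eq, Fin.mk.injEq, true_and] at h ⊢
      exact Fin.ext (by omega)
    simpa using hf.fintype_card_le_finrank
  have hrn := LinearMap.finrank_range_add_finrank_ker (Z ^ p)
  have hs : ∑ i, min p (s i) + ∑ i, (s i - p) = ∑ i, s i := by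
    rw [← Finset.sum_add_distrib]
    exact Finset.sum_congr rfl fun i _ => by omega
  omega

lemma jt_sl2 {U : Type*} [AddCommGroup U] [Module ℂ U] [FiniteDimensional ℂ U]
    (u : ℕ) (hu : Module.finrank ℂ U = u) (hu1 : 1 ≤ u)
    (X : Module.End ℂ U) (hX : X ^ u = 0 ∧ X ^ (u - 1) ≠ 0) :
    ∃ (F H : Module.End ℂ U) (e : ℕ → U),
      (∀ x, F (X x) = X (F x) - H x) ∧ (∀ x, H (X x) = X (H x) + (2 : ℂ) • X x) ∧
      F (e 0) = 0 ∧ (∀ i, i + 1 < u → F (e (i + 1)) = e i) ∧ e 0 ≠ 0 ∧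
      (∀ i, H (e i) = (2 * i + 1 - u : ℂ) • e i) := by
  obtain ⟨g, hg⟩ : ∃ g, (X ^ (u - 1)) g ≠ 0 := by
    by_contra h
    push Not at h
    exact hX.2 (LinearMap.ext h)
  have hz : ∀ k, u ≤ k → (X ^ k) g = 0 := by
    intro k hk
    obtain ⟨d, rfl⟩ := Nat.exists_eq_add_of_le hk
    rw [pow_add, hX.1, zero_mul, LinearMap.zero_apply]
  have L0 := jt_strings_li X (fun _ : Unit => u) (fun _ => g) (fun _ => hz u le_rfl)
    (by rw [linearIndependent_unique_iff]; exact hg)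
  have L : LinearIndependent ℂ (fun k : Fin u => (X ^ (k : ℕ)) g) :=
    L0.comp (fun k : Fin u => (⟨(), k⟩ : Σ _ : Unit, Fin u)) (by
      intro a b h
      simpa using h)
  have : Nonempty (Fin u) := ⟨⟨0, hu1⟩⟩
  let b := basisOfLinearIndependentOfCardEqFinrank L (by simp [hu])
  have hb : ∀ k : Fin u, b k = (X ^ (k : ℕ)) g := fun k => by simp [b]
  let F : Module.End ℂ U := b.constr ℂ (fun k : Fin u =>
    ((k : ℂ) * (u - k)) • (X ^ ((k : ℕ) - 1)) g)
  let H : Module.End ℂ U := b.constr ℂ (fun k : Fin u =>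
    ((2 * k + 1 - u : ℂ)) • (X ^ (k : ℕ)) g)
  have hH : ∀ i : ℕ, H ((X ^ i) g) = (2 * i + 1 - u : ℂ) • (X ^ i) g := by
    intro i
    by_cases hi : i < u
    · have := b.constr_basis ℂ (fun k : Fin u =>
        ((2 * k + 1 - u : ℂ)) • (X ^ (k : ℕ)) g) ⟨i, hi⟩
      rw [hb] at this
      exact this
    · rw [hz i (by omega)]; simp
  have hF : ∀ i : ℕ, F ((X ^ i) g) = ((i : ℂ) * (u - i)) • (X ^ (i - 1)) g := by
    intro i
    by_cases hi : i < u
    · have := b.constr_basis ℂ (fun k : Fin u =>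
        ((k : ℂ) * (u - k)) • (X ^ ((k : ℕ) - 1)) g) ⟨i, hi⟩
      rw [hb] at this
      exact this
    · rw [hz i (by omega)]
      by_cases hi2 : i = u
      · subst hi2; simp
      · rw [hz (i - 1) (by omega)]; simp
  have hXs : ∀ i : ℕ, X ((X ^ i) g) = (X ^ (i + 1)) g := by
    intro i; rw [pow_succ', Module.End.mul_apply]
  let c : ℕ → ℂ := fun i => ∏ k ∈ Finset.range i, (((k + 1 : ℕ) : ℂ) * (u - (k + 1 : ℕ)))
  refine ⟨F, H, fun i => (c i)⁻¹ • (X ^ i) g, ?_, ?_, ?_, ?_, ?_, ?_⟩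
  · have : F * X = X * F - H := by
      apply b.ext
      intro k
      rw [hb]
      simp only [Module.End.mul_apply, LinearMap.sub_apply, hXs, hF, hH, map_smul]
      rcases Nat.eq_zero_or_pos (k : ℕ) with hk | hk
      · rw [hk]; push_cast; simp [← neg_smul]
      · rw [Nat.sub_add_cancel hk, ← sub_smul, Nat.add_sub_cancel]
        congr 1
        push_cast; ring
    exact fun x => LinearMap.congr_fun this x
  · have : H * X = X * H + (2 : ℂ) • X := by
      apply b.ext
      intro k
      rw [hb]
      simp only [Module.End.mul_apply, LinearMap.add_apply, LinearMap.smul_apply, hXs, hH,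
        map_smul, ← add_smul]
      congr 1
      push_cast; ring
    exact fun x => LinearMap.congr_fun this x
  · simp only [map_smul, hF]; simp
  · intro i hi
    simp only [map_smul, hF, smul_smul, Nat.add_sub_cancel]
    congr 1
    have hne : (((i + 1 : ℕ) : ℂ) * (u - (i + 1 : ℕ))) ≠ 0 := by
      refine mul_ne_zero (by exact_mod_cast Nat.succ_ne_zero i) (sub_ne_zero.2 ?_)
      exact_mod_cast (by omega : u ≠ i + 1)
    simp only [c, Finset.prod_range_succ, mul_inv]
    rw [← mul_inv, ← mul_inv, mul_inv, mul_assoc, inv_mul_cancel₀ hne, mul_one]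
  · simp only [c, Finset.range_zero, Finset.prod_empty, inv_one, one_smul, pow_zero,
      Module.End.one_apply]
    rintro rfl
    simp at hg
  · intro i
    simp only [map_smul, hH]
    rw [smul_comm]

lemma jt_weight {W : Type*} [AddCommGroup W] [Module ℂ W] (Z F H : Module.End ℂ W)
    (hH : ∀ x, H (Z x) = Z (H x) + (2 : ℂ) • Z x) (w : W) (l : ℂ)
    (hHw : H w = l • w) (k : ℕ) : H ((Z ^ k) w) = (l + 2 * k) • (Z ^ k) w := by
  induction k with
  | zero => simpa using hHw
  | succ k ih =>
    rw [pow_succ', Module.End.mul_apply, hH, ih, map_smul, ← add_smul]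
    congr 1
    push_cast; ring

lemma jt_F {W : Type*} [AddCommGroup W] [Module ℂ W] (Z F H : Module.End ℂ W)
    (hF : ∀ x, F (Z x) = Z (F x) - H x)
    (hH : ∀ x, H (Z x) = Z (H x) + (2 : ℂ) • Z x) (w : W) (l : ℂ)
    (hHw : H w = l • w) (hFw : F w = 0) (k : ℕ) :
    F ((Z ^ (k + 1)) w) = (-((k + 1) * (l + k)) : ℂ) • (Z ^ k) w := by
  induction k with
  | zero => simp [hF, hHw, hFw]
  | succ k ih =>
    rw [pow_succ', Module.End.mul_apply, hF, ih, map_smul, jt_weight Z F H hH w l hHw,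
      ← Module.End.mul_apply, ← pow_succ', ← sub_smul]
    congr 1
    push_cast; ring

lemma jt_ne {W : Type*} [AddCommGroup W] [Module ℂ W] (Z F H : Module.End ℂ W)
    (hF : ∀ x, F (Z x) = Z (F x) - H x)
    (hH : ∀ x, H (Z x) = Z (H x) + (2 : ℂ) • Z x) (w : W) (l : ℂ)
    (hHw : H w = l • w) (hFw : F w = 0) (hw : w ≠ 0) (n : ℕ) (hl : ∀ k < n, l + (k : ℂ) ≠ 0) :
    (Z ^ n) w ≠ 0 := by
  induction n with
  | zero => simpa using hw
  | succ n ih =>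
    intro h
    have h1 := jt_F Z F H hF hH w l hHw hFw n
    rw [h, map_zero] at h1
    have h2 := ih fun k hk => hl k (by omega)
    have h3 : ((n : ℂ) + 1) ≠ 0 := by exact_mod_cast Nat.succ_ne_zero n
    exact smul_ne_zero (neg_ne_zero.2 (mul_ne_zero h3 (hl n (by omega)))) h2 h1.symm

lemma jt_top {W : Type*} [AddCommGroup W] [Module ℂ W] (Z F H : Module.End ℂ W)
    (hF : ∀ x, F (Z x) = Z (F x) - H x)
    (hH : ∀ x, H (Z x) = Z (H x) + (2 : ℂ) • Z x) (hZ : IsNilpotent Z) (w : W) (m : ℕ)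
    (hHw : H w = (-m : ℂ) • w) (hFw : F w = 0) :
    (Z ^ (m + 1)) w = 0 := by
  by_contra hne
  obtain ⟨n, hn⟩ := hZ
  refine jt_ne Z F H hF hH ((Z ^ (m + 1)) w) (m + 2) ?_ ?_ hne n ?_ (by rw [hn]; rfl)
  · rw [jt_weight Z F H hH w _ hHw]
    congr 1
    push_cast; ring
  · rw [jt_F Z F H hF hH w _ hHw hFw]
    simp
  · intro k _
    exact_mod_cast (by omega : m + 2 + k ≠ 0)

open TensorProduct in
lemma jt_prim {U V : Type*} [AddCommGroup U] [Module ℂ U]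
    [AddCommGroup V] [Module ℂ V] (u v d : ℕ) (hdu : d < u) (hdv : d < v)
    (F H : Module.End ℂ U) (e : ℕ → U) (F' H' : Module.End ℂ V) (e' : ℕ → V)
    (h1 : F (e 0) = 0) (h2 : ∀ i, i + 1 < u → F (e (i + 1)) = e i) (h3 : e 0 ≠ 0)
    (h4 : ∀ i, H (e i) = (2 * i + 1 - u : ℂ) • e i)
    (h1' : F' (e' 0) = 0) (h2' : ∀ i, i + 1 < v → F' (e' (i + 1)) = e' i) (h3' : e' 0 ≠ 0)
    (h4' : ∀ i, H' (e' i) = (2 * i + 1 - v : ℂ) • e' i) :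
    ∃ w : U ⊗[ℂ] V, w ≠ 0 ∧
      (TensorProduct.map F LinearMap.id + TensorProduct.map LinearMap.id F' :
        Module.End ℂ (U ⊗[ℂ] V)) w = 0 ∧
      (TensorProduct.map H LinearMap.id + TensorProduct.map LinearMap.id H' :
        Module.End ℂ (U ⊗[ℂ] V)) w =
        (2 * d + 2 - u - v : ℂ) • w := by
  refine ⟨∑ i ∈ Finset.range (d + 1), ((-1 : ℂ) ^ i) • (e i ⊗ₜ[ℂ] e' (d - i)), ?_, ?_, ?_⟩
  · intro h
    have hz : ∀ i, i < u → ∀ k, i < k → (F ^ k) (e i) = 0 := by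
      intro i
      induction i with
      | zero =>
        intro _ k hk
        obtain ⟨k, rfl⟩ : ∃ k', k = k' + 1 := ⟨k - 1, by omega⟩
        rw [pow_succ, Module.End.mul_apply, h1, map_zero]
      | succ i ih =>
        intro hi k hk
        obtain ⟨k, rfl⟩ : ∃ k', k = k' + 1 := ⟨k - 1, by omega⟩
        rw [pow_succ, Module.End.mul_apply, h2 i hi]
        exact ih (by omega) k (by omega)
    have ht : ∀ i, i < u → (F ^ i) (e i) = e 0 := by
      intro i
      induction i with
      | zero => simp
      | succ i ih =>
        intro hi
        rw [pow_succ, Module.End.mul_apply, h2 i hi]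
        exact ih (by omega)
    have h5 := congrArg (TensorProduct.map (F ^ d) (LinearMap.id : V →ₗ[ℂ] V)) h
    rw [map_zero, map_sum, Finset.sum_range_succ, Finset.sum_eq_zero, zero_add] at h5
    · simp only [map_smul, TensorProduct.map_tmul, ht d hdu, Nat.sub_self, LinearMap.id_apply] at h5
      have h6 := (smul_eq_zero.1 h5).resolve_left (by simp)
      have hf : ∃ f : Module.Dual ℂ U, f (e 0) ≠ 0 := by
        by_contra hc
        push Not at hc
        exact h3 ((Module.forall_dual_apply_eq_zero_iff ℂ _).1 hc)
      have hf' : ∃ f : Module.Dual ℂ V, f (e' 0) ≠ 0 := by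
        by_contra hc
        push Not at hc
        exact h3' ((Module.forall_dual_apply_eq_zero_iff ℂ _).1 hc)
      obtain ⟨f, hf⟩ := hf
      obtain ⟨f', hf'⟩ := hf'
      have h7 := congrArg (fun t => TensorProduct.lid ℂ ℂ (TensorProduct.map f f' t)) h6
      simp only [TensorProduct.map_tmul, TensorProduct.lid_tmul, map_zero, smul_eq_mul] at h7
      exact mul_ne_zero hf hf' h7
    · intro i hi
      rw [Finset.mem_range] at hi
      simp [hz i (by omega) d hi]
  · simp only [LinearMap.add_apply, map_sum, map_smul, TensorProduct.map_tmul, LinearMap.id_apply]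
    simp only [smul_add, Finset.sum_add_distrib]
    rw [Finset.sum_range_succ', Finset.sum_range_succ]
    simp only [h1, TensorProduct.zero_tmul, Nat.sub_self, h1', TensorProduct.tmul_zero, smul_zero,
      add_zero]
    rw [← Finset.sum_add_distrib]
    apply Finset.sum_eq_zero
    intro i hi
    rw [Finset.mem_range] at hi
    rw [h2 i (by omega)]
    obtain ⟨t, ht⟩ : ∃ t, d - i = t + 1 := ⟨d - i - 1, by omega⟩
    rw [ht, h2' t (by omega), show d - (i + 1) = t by omega, ← add_smul, pow_succ]
    simp
  · simp only [LinearMap.add_apply, map_sum, map_smul, TensorProduct.map_tmul, LinearMap.id_apply]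
    rw [Finset.smul_sum]
    refine Finset.sum_congr rfl fun i hi => ?_
    rw [Finset.mem_range] at hi
    rw [h4, h4', ← TensorProduct.smul_tmul', TensorProduct.tmul_smul, ← add_smul,
      smul_comm]
    congr 1
    rw [Nat.cast_sub (by omega)]
    ring


open Finset in
/-- Jordan type of a tensor product (Proposition 2.2): if `X` and `Y` are regular nilpotent
endomorphisms of `U` and `V` of dimensions `u ≥ v ≥ 1`, then
`Z = X ⊗ id + id ⊗ Y` is nilpotent with exactly `v` Jordan blocks, of sizes
`u−v+1, u−v+3, …, u+v−1`. -/
theorem jordan_type_of_tensor_sum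
    (U V : Type*) [AddCommGroup U] [Module ℂ U] [FiniteDimensional ℂ U]
    [AddCommGroup V] [Module ℂ V] [FiniteDimensional ℂ V]
    (u v : ℕ) (hu : Module.finrank ℂ U = u) (hv : Module.finrank ℂ V = v)
    (huv : v ≤ u) (hv1 : 1 ≤ v)
    (X : Module.End ℂ U) (hX : X ^ u = 0 ∧ X ^ (u - 1) ≠ 0)
    (Y : Module.End ℂ V) (hY : Y ^ v = 0 ∧ Y ^ (v - 1) ≠ 0)
    (Z : Module.End ℂ (TensorProduct ℂ U V))
    (hZ : Z = TensorProduct.map X LinearMap.id + TensorProduct.map LinearMap.id Y) :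
    IsNilpotent Z ∧
      ∀ p : ℕ, Module.finrank ℂ (LinearMap.ker (Z ^ p)) =
        ∑ j ∈ Icc 1 v, min p (u - v + 2 * j - 1) := by
  subst hZ
  have hnil : IsNilpotent (TensorProduct.map X (LinearMap.id : V →ₗ[ℂ] V) +
      TensorProduct.map (LinearMap.id : U →ₗ[ℂ] U) Y) := by
    have hc : Commute (TensorProduct.map X (LinearMap.id : V →ₗ[ℂ] V))
      (TensorProduct.map (LinearMap.id : U →ₗ[ℂ] U) Y) := by
      apply TensorProduct.ext'
      intro x y
      simp [Module.End.mul_apply]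
    apply hc.isNilpotent_add
    · refine ⟨u, ?_⟩
      rw [← Module.End.one_eq_id, TensorProduct.map_pow, hX.1, TensorProduct.map_zero_left]
    · refine ⟨v, ?_⟩
      rw [← Module.End.one_eq_id, TensorProduct.map_pow, hY.1, TensorProduct.map_zero_right]
  refine ⟨hnil, fun p => ?_⟩
  obtain ⟨F, H, e, hF, hH, h1, h2, h3, h4⟩ := jt_sl2 u hu (by omega) X hX
  obtain ⟨F', H', e', hF', hH', h1', h2', h3', h4'⟩ := jt_sl2 v hv hv1 Y hY
  have hw := fun i : Fin v => jt_prim u v (v - 1 - i) (by omega) (by omega) F H e F' H' e'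
    h1 h2 h3 h4 h1' h2' h3' h4'
  choose w hw0 hwF hwH using hw
  set Z := TensorProduct.map X (LinearMap.id : V →ₗ[ℂ] V) +
      TensorProduct.map (LinearMap.id : U →ₗ[ℂ] U) Y with hZ
  set FF := TensorProduct.map F (LinearMap.id : V →ₗ[ℂ] V) +
      TensorProduct.map (LinearMap.id : U →ₗ[ℂ] U) F' with hFF
  set HH := TensorProduct.map H (LinearMap.id : V →ₗ[ℂ] V) +
      TensorProduct.map (LinearMap.id : U →ₗ[ℂ] U) H' with hHH
  have kF : ∀ x, FF (Z x) = Z (FF x) - HH x := by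
    have : FF * Z = Z * FF - HH := by
      apply TensorProduct.ext'
      intro x y
      simp only [hZ, hFF, hHH, Module.End.mul_apply, LinearMap.add_apply, LinearMap.sub_apply,
        TensorProduct.map_tmul, LinearMap.id_apply, map_add, hF, hF',
        TensorProduct.sub_tmul, TensorProduct.tmul_sub]
      abel
    exact fun x => LinearMap.congr_fun this x
  have kH : ∀ x, HH (Z x) = Z (HH x) + (2 : ℂ) • Z x := by
    have : HH * Z = Z * HH + (2 : ℂ) • Z := by
      apply TensorProduct.ext'
      intro x y
      simp only [hZ, hHH, Module.End.mul_apply, LinearMap.add_apply, LinearMap.smul_apply,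
        TensorProduct.map_tmul, LinearMap.id_apply, map_add, hH, hH',
        TensorProduct.add_tmul, TensorProduct.tmul_add, TensorProduct.tmul_smul, smul_add,
        ← TensorProduct.smul_tmul']
      abel
    exact fun x => LinearMap.congr_fun this x
  have hwH2 : ∀ i : Fin v, HH (w i) = (-((u - v + 2 * i : ℕ) : ℂ)) • w i := by
    intro i
    rw [hwH]
    congr 1
    obtain ⟨t, ht⟩ : ∃ t, v = i + 1 + t := ⟨v - 1 - i, by omega⟩
    obtain ⟨r, hr⟩ : ∃ r, u = v + r := ⟨u - v, by omega⟩
    rw [show v - 1 - (i : ℕ) = t by omega, show u - v = r by omega, hr]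
    push_cast
    have : (v : ℂ) = i + 1 + t := by exact_mod_cast ht
    rw [this]; ring
  have key := jt_ker Z (fun i : Fin v => u - v + 2 * i + 1) w
    (fun i => jt_top Z FF HH kF kH hnil (w i) _ (hwH2 i) (hwF i)) ?_ ?_ p
  · rw [key, Fin.sum_univ_eq_sum_range (fun i => min p (u - v + 2 * i + 1)) v,
      ← Finset.Ico_succ_right_eq_Icc, Finset.sum_Ico_eq_sum_range]
    refine Finset.sum_congr (by simp) fun i _ => ?_
    congr 1
    omega
  · simp only [Nat.add_sub_cancel]
    refine Module.End.eigenvectors_linearIndependent' HH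
      (fun i : Fin v => ((u - v + 2 * i : ℕ) : ℂ)) ?_ _ ?_
    · intro a b hab
      simp only at hab
      have : u - v + 2 * (a : ℕ) = u - v + 2 * b := by exact_mod_cast hab
      exact Fin.ext (by omega)
    · intro i
      rw [Module.End.hasEigenvector_iff, Module.End.mem_eigenspace_iff]
      constructor
      · rw [jt_weight Z FF HH kH _ _ (hwH2 i)]
        congr 1
        ring
      · refine jt_ne Z FF HH kF kH _ _ (hwH2 i) (hwF i) (hw0 i) _ ?_
        intro k hk h
        have h5 : (k : ℂ) = ((u - v + 2 * i : ℕ) : ℂ) := by linear_combination h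
        have : k = u - v + 2 * (i : ℕ) := by exact_mod_cast h5
        omega
  · rw [Module.finrank_tensorProduct, hu, hv,
      Fin.sum_univ_eq_sum_range (fun i => u - v + 2 * i + 1) v]
    obtain ⟨r, rfl⟩ : ∃ r, u = v + r := ⟨u - v, by omega⟩
    rw [Nat.add_sub_cancel_left]
    have : ∀ n, ∑ i ∈ Finset.range n, (r + 2 * i + 1) = (n + r) * n := by
      intro n
      induction n with
      | zero => simp
      | succ n ih => rw [Finset.sum_range_succ, ih]; ring
    exact this v
end

section
/- Let U be a complex vector space of dimension u ≥ 2 and let X be a regular nilpotent endomorphism of U. Let ∧²X denote the derivation extension of X to the exterior square ⋀²U, i.e. the unique linear endomorphism with (∧²X)(x ∧ y) = Xx ∧ y + x ∧ Xy. Then ∧²X is nilpotent, and: if u = 2v is even, ∧²X has exactly v Jordan blocks, of sizes 1, 5, …, 2u−3 (i.e. dim ker((∧²X)^p) = Σ_{j=1}^{v} min(p, 4j−3) for all p ≥ 0); if u = 2v+1 is odd, ∧²X has exactly v Jordan blocks, of sizes 3, 7, …, 2u−3 (i.e. dim ker((∧²X)^p) = Σ_{j=1}^{v} min(p, 4j−1)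 for all p ≥ 0). -/
namespace JT
open Finset

theorem poly_sparse (N : ℕ) : ∀ (f : Polynomial ℂ) (S : Finset ℕ), f.support ⊆ S → S.card ≤ N →
    (Polynomial.X + 1) ^ N ∣ f → f = 0 := by
  induction N with
  | zero =>
    intro f S h1 h2 _
    have : S = ∅ := by simpa using h2
    subst this
    simpa using h1
  | succ N ih =>
    intro f S h1 h2 h3
    by_contra hf
    obtain ⟨m, hm⟩ := Polynomial.nonempty_support_iff.mpr hf
    have hh : Polynomial.X * Polynomial.derivative f - Polynomial.C (m : ℂ) * f = 0 := by
      apply ih _ (S.erase m)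
      · intro n hn
        rw [Polynomial.mem_support_iff] at hn
        have hc : (Polynomial.X * Polynomial.derivative f - Polynomial.C (m : ℂ) * f).coeff n
            = ((n : ℂ) - m) * f.coeff n := by
          cases n with
          | zero => simp
          | succ n => simp [Polynomial.coeff_X_mul, Polynomial.coeff_derivative]; ring
        rw [hc] at hn
        rw [Finset.mem_erase]
        refine ⟨?_, h1 ?_⟩
        · rintro rfl; simp at hn
        · rw [Polynomial.mem_support_iff]; exact right_ne_zero_of_mul hn
      · rw [Finset.card_erase_of_mem (h1 hm)]; omega
      · apply dvd_sub
        · apply Dvd.dvd.mul_left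
          obtain ⟨q, rfl⟩ := h3
          rw [Polynomial.derivative_mul, Polynomial.derivative_pow]
          simp only [Nat.add_sub_cancel]
          apply dvd_add
          · apply Dvd.dvd.mul_right
            apply Dvd.dvd.mul_right
            exact Dvd.intro_left _ rfl
          · apply Dvd.dvd.mul_right
            exact pow_dvd_pow _ (by omega)
        · exact Dvd.dvd.mul_left ((pow_dvd_pow _ (by omega)).trans h3) _
    have hmon : f = Polynomial.monomial m (f.coeff m) := by
      ext n
      rw [Polynomial.coeff_monomial]
      split_ifs with h
      · rw [h]
      · have := congrArg (fun q => q.coeff n) hh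
        have hc : (Polynomial.X * Polynomial.derivative f - Polynomial.C (m : ℂ) * f).coeff n
            = ((n : ℂ) - m) * f.coeff n := by
          cases n with
          | zero => simp
          | succ n => simp [Polynomial.coeff_X_mul, Polynomial.coeff_derivative]; ring
        simp only [hc, Polynomial.coeff_zero, mul_eq_zero, sub_eq_zero, Nat.cast_inj] at this
        rcases this with h' | h'
        · exact absurd h'.symm h
        · exact h'
    have he : f.eval (-1) = 0 := by
      obtain ⟨q, rfl⟩ := h3
      simp
    rw [hmon, Polynomial.eval_monomial] at he
    rw [Polynomial.mem_support_iff] at hm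
    simp [hm] at he

theorem reflect_pow (p : ℕ) : Polynomial.reflect p ((Polynomial.X + 1 : Polynomial ℂ) ^ p) =
    (Polynomial.X + 1) ^ p := by
  induction p with
  | zero => simp
  | succ p ih =>
    rw [pow_succ, Polynomial.reflect_mul _ _ (F := p) (G := 1), ih]
    · congr 1
      rw [Polynomial.reflect_add]
      have := Polynomial.reflect_monomial (R := ℂ) 1 1
      have h2 := Polynomial.reflect_monomial (R := ℂ) 1 0
      simp at this h2
      simp [this, add_comm]
    · refine (Polynomial.natDegree_pow_le).trans ?_
      have : (Polynomial.X + 1 : Polynomial ℂ).natDegree ≤ 1 := by compute_degree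
      nlinarith
    · compute_degree

theorem deg_pow (p : ℕ) : ((Polynomial.X + 1 : Polynomial ℂ) ^ p).natDegree ≤ p := by
  refine (Polynomial.natDegree_pow_le).trans ?_
  have : (Polynomial.X + 1 : Polynomial ℂ).natDegree ≤ 1 := by compute_degree
  nlinarith

theorem anti_coeff (T : ℕ) (g : Polynomial ℂ) (hg : Polynomial.reflect T g = -g) (a : ℕ) (ha : a ≤ T) :
    g.coeff (T - a) = - g.coeff a := by
  have := congrArg (fun q => q.coeff a) hg
  simpa [Polynomial.coeff_reflect, Polynomial.revAt_le ha] using this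

theorem anti_mul (t p : ℕ) (f : Polynomial ℂ) (hd : f.natDegree ≤ t)
    (hf : Polynomial.reflect t f = -f) :
    Polynomial.reflect (p + t) ((Polynomial.X + 1) ^ p * f) = -((Polynomial.X + 1) ^ p * f) := by
  rw [Polynomial.reflect_mul _ _ (deg_pow p) hd, reflect_pow, hf]; ring

theorem exists_f (u i : ℕ) (hi : 2 * i + 2 ≤ u) : ∃ f : Polynomial ℂ, f ≠ 0 ∧
    f.natDegree ≤ 2 * i + 1 ∧ Polynomial.reflect (2 * i + 1) f = -f ∧
    ∀ a, a < u → a ≤ 2 * u - 2 - 2 * i → 2 * u - 2 - 2 * i - a < u →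
      ((Polynomial.X + 1) ^ (2 * u - 3 - 4 * i) * f).coeff a = 0 := by
  let L : (Fin (i+1) → ℂ) →ₗ[ℂ] Polynomial ℂ :=
    ∑ a : Fin (i+1), (LinearMap.proj a : (Fin (i+1) → ℂ) →ₗ[ℂ] ℂ).smulRight
      (Polynomial.X ^ (a : ℕ) - Polynomial.X ^ (2 * i + 1 - a))
  have hL : ∀ c, L c = ∑ a : Fin (i+1), c a •
      (Polynomial.X ^ (a : ℕ) - Polynomial.X ^ (2 * i + 1 - a)) := by
    intro c; simp [L]
  let M : (Fin (i+1) → ℂ) →ₗ[ℂ] (Fin i → ℂ) := LinearMap.pi fun k =>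
    (Polynomial.lcoeff ℂ (u - 1 - 2 * i + k)) ∘ₗ
      (LinearMap.mulLeft ℂ ((Polynomial.X + 1) ^ (2 * u - 3 - 4 * i))) ∘ₗ L
  have hM : LinearMap.ker M ≠ ⊥ := LinearMap.ker_ne_bot_of_finrank_lt (by simp)
  obtain ⟨c, hc, hc0⟩ := (Submodule.ne_bot_iff _).mp hM
  have hdeg : (L c).natDegree ≤ 2 * i + 1 := by
    rw [hL]
    apply Polynomial.natDegree_sum_le_of_forall_le
    intro a _
    refine (Polynomial.natDegree_smul_le _ _).trans ((Polynomial.natDegree_sub_le _ _).trans ?_)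
    simp; omega
  have href : Polynomial.reflect (2 * i + 1) (L c) = - L c := by
    ext n
    rw [Polynomial.coeff_reflect, hL]
    simp only [Polynomial.finsetSum_coeff, Polynomial.coeff_neg, Polynomial.coeff_smul,
      Polynomial.coeff_sub, Polynomial.coeff_X_pow, ← Finset.sum_neg_distrib]
    refine Finset.sum_congr rfl fun a _ => ?_
    have ha := a.2
    by_cases hn : n ≤ 2 * i + 1
    · rw [Polynomial.revAt_le hn]
      have h1 : (2 * i + 1 - n = (a : ℕ)) ↔ (n = 2 * i + 1 - a) := by omega
      have h2 : (2 * i + 1 - n = 2 * i + 1 - (a : ℕ)) ↔ (n = a) := by omega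
      simp only [h1, h2, smul_eq_mul]; ring
    · rw [Polynomial.revAt_eq_self_of_lt (by omega)]
      have h1 : ¬ n = (a : ℕ) := by omega
      have h2 : ¬ n = 2 * i + 1 - (a : ℕ) := by omega
      simp [h1, h2]
  refine ⟨L c, ?_, hdeg, href, ?_⟩
  · intro h0
    apply hc0
    ext b
    have := congrArg (fun q => q.coeff (b : ℕ)) h0
    simp only [hL, Polynomial.finsetSum_coeff, Polynomial.coeff_smul,
      Polynomial.coeff_sub, Polynomial.coeff_X_pow, Polynomial.coeff_zero] at this
    rw [Finset.sum_eq_single b] at this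
    · have hb : ¬ (b : ℕ) = 2 * i + 1 - b := by omega
      simpa [hb] using this
    · intro a _ hab
      have h1 : ¬ (b : ℕ) = a := fun h => hab (Fin.ext h.symm)
      have h2 : ¬ (b : ℕ) = 2 * i + 1 - a := by omega
      simp [h1, h2]
    · simp
  · have key : ∀ a, u - 1 - 2 * i ≤ a → a < u - 1 - i →
        ((Polynomial.X + 1) ^ (2 * u - 3 - 4 * i) * L c).coeff a = 0 := by
      intro a h1 h2
      have := congrFun (LinearMap.mem_ker.mp hc) ⟨a - (u - 1 - 2 * i), by omega⟩
      simp only [M, LinearMap.pi_apply, LinearMap.comp_apply, LinearMap.mulLeft_apply,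
        Polynomial.lcoeff_apply, Pi.zero_apply] at this
      rwa [show u - 1 - 2 * i + (a - (u - 1 - 2 * i)) = a by omega] at this
    intro a h1 h2 h3
    have hanti := anti_mul (2 * i + 1) (2 * u - 3 - 4 * i) (L c) hdeg href
    rw [show 2 * u - 3 - 4 * i + (2 * i + 1) = 2 * u - 2 - 2 * i by omega] at hanti
    have hac := anti_coeff _ _ hanti a h2
    rcases lt_trichotomy a (u - 1 - i) with h | h | h
    · exact key a (by omega) h
    · rw [show 2 * u - 2 - 2 * i - a = a by omega] at hac
      exact self_eq_neg.mp hac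
    · rw [key _ (by omega) (by omega)] at hac
      exact neg_eq_zero.mp hac.symm

theorem exists_a (u i : ℕ) (hi : 2 * i + 2 ≤ u) (f : Polynomial ℂ) (hf : f ≠ 0)
    (hd : f.natDegree ≤ 2 * i + 1) :
    ∃ a, a < u ∧ a ≤ 2 * u - 3 - 2 * i ∧ 2 * u - 3 - 2 * i - a < u ∧
      ((Polynomial.X + 1) ^ (2 * u - 4 - 4 * i) * f).coeff a ≠ 0 := by
  by_contra! h
  have h0 : (Polynomial.X + 1) ^ (2 * u - 4 - 4 * i) * f = 0 := by
    apply poly_sparse (2 * u - 4 - 4 * i) _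
      (Finset.range (u - 2 - 2 * i) ∪ Finset.Ico u (2 * u - 2 - 2 * i))
    · intro a ha
      rw [Polynomial.mem_support_iff] at ha
      have h1 : a ≤ 2 * u - 3 - 2 * i := by
        refine (Polynomial.le_natDegree_of_ne_zero ha).trans (Polynomial.natDegree_mul_le.trans ?_)
        have := deg_pow (2 * u - 4 - 4 * i)
        omega
      simp only [Finset.mem_union, Finset.mem_range, Finset.mem_Ico]
      by_contra hcon
      exact ha (h a (by omega) h1 (by omega))
    · refine (Finset.card_union_le _ _).trans ?_
      simp; omega
    · exact Dvd.intro _ rfl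
  have hX : (Polynomial.X + 1 : Polynomial ℂ) ≠ 0 := by
    simpa using Polynomial.X_add_C_ne_zero (1 : ℂ)
  exact (mul_ne_zero (pow_ne_zero _ hX) hf) h0

section chains
variable {K V : Type*} [Field K] [AddCommGroup V] [Module K V]

theorem pow_zero_of_le (D : Module.End K V) (x : V) (s n : ℕ) (h : (D ^ s) x = 0) (hn : s ≤ n) :
    (D ^ n) x = 0 := by
  obtain ⟨r, rfl⟩ := Nat.exists_eq_add_of_le' hn
  rw [pow_add, Module.End.mul_apply, h, map_zero]

theorem chain_indep {v : ℕ} (D : Module.End K V) (w : Fin v → V) (s : Fin v → ℕ)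
    (h0 : ∀ i, (D ^ (s i)) (w i) = 0)
    (hli : LinearIndependent K fun i => (D ^ (s i - 1)) (w i)) :
    LinearIndependent K fun q : (Σ i, Fin (s i)) => (D ^ (q.2 : ℕ)) (w q.1) := by
  rw [Fintype.linearIndependent_iff] at hli ⊢
  intro c hc
  have H : ∀ m, ∀ i (k : Fin (s i)), ∑ i, s i ≤ (s i - 1 - k) + m → c ⟨i, k⟩ = 0 := by
    intro m
    induction m with
    | zero =>
      intro i k h
      have h1 : s i ≤ ∑ i, s i := Finset.single_le_sum (f := s) (fun _ _ => Nat.zero_le _) (mem_univ i)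
      have := k.2
      omega
    | succ m ih =>
      intro i k h
      by_cases hk : ∑ i, s i ≤ (s i - 1 - k) + m
      · exact ih i k hk
      obtain ⟨n, hn⟩ : ∃ n, n = s i - 1 - (k : ℕ) := ⟨_, rfl⟩
      have hb : ∑ i, s i = n + m + 1 := by omega
      have h1 := congrArg (D ^ n) hc
      rw [map_sum, map_zero, Fintype.sum_sigma] at h1
      have h2 : ∀ j, ∑ l : Fin (s j), (D ^ n) (c ⟨j, l⟩ • (D ^ (l : ℕ)) (w j)) =
          (if h : n < s j then c ⟨j, ⟨s j - 1 - n, by omega⟩⟩ else 0) • (D ^ (s j - 1)) (w j) := by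
        intro j
        have hz : ∀ l : Fin (s j), (l : ℕ) ≠ s j - 1 - n →
            (D ^ n) (c ⟨j, l⟩ • (D ^ (l : ℕ)) (w j)) = 0 := by
          intro l hl
          rw [map_smul, ← Module.End.mul_apply, ← pow_add]
          by_cases hl2 : s j ≤ n + l
          · rw [pow_zero_of_le D _ _ _ (h0 j) hl2, smul_zero]
          · rw [ih j l (by omega), zero_smul]
        split_ifs with h
        · rw [Finset.sum_eq_single ⟨s j - 1 - n, by omega⟩]
          · rw [map_smul, ← Module.End.mul_apply, ← pow_add]
            congr 3
            simp only; omega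
          · intro l _ hl
            apply hz
            intro h'; exact hl (Fin.ext h')
          · simp
        · rw [zero_smul]
          apply Finset.sum_eq_zero
          intro l _
          rw [map_smul, ← Module.End.mul_apply, ← pow_add,
            pow_zero_of_le D _ _ _ (h0 j) (by omega), smul_zero]
      simp only [h2] at h1
      have h3 := hli _ h1 i
      have hks := k.2
      rw [dif_pos (by omega)] at h3
      convert h3 using 3
      simp only [Fin.ext_iff]; omega
  rintro ⟨i, k⟩
  exact H _ i k (Nat.le_add_left _ _)

theorem chain_dims [FiniteDimensional K V] {v : ℕ} (D : Module.End K V) (w : Fin v → V)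
    (s : Fin v → ℕ)
    (h0 : ∀ i, (D ^ (s i)) (w i) = 0)
    (hli : LinearIndependent K fun i => (D ^ (s i - 1)) (w i))
    (hdim : Module.finrank K V = ∑ i, s i) (p : ℕ) :
    Module.finrank K (LinearMap.ker (D ^ p)) = ∑ i, min p (s i) := by
  have hI := chain_indep D w s h0 hli
  have hA : ∑ i, min p (s i) ≤ Module.finrank K (LinearMap.ker (D ^ p)) := by
    let φ : (Σ i, Fin (min p (s i))) → (Σ i, Fin (s i)) :=
      fun q => ⟨q.1, ⟨s q.1 - min p (s q.1) + q.2, by have := q.2.2; omega⟩⟩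
    have hφ : Function.Injective φ := by
      rintro ⟨i, k⟩ ⟨j, l⟩ h
      simp only [φ, Sigma.mk.injEq] at h
      obtain ⟨rfl, h⟩ := h
      simp only [heq_eq_eq, Fin.mk.injEq] at h
      congr 1
      exact Fin.ext (by omega)
    have hJ := hI.comp φ hφ
    let g : (Σ i, Fin (min p (s i))) → LinearMap.ker (D ^ p) := fun q =>
      ⟨(D ^ ((φ q).2 : ℕ)) (w q.1), by
        rw [LinearMap.mem_ker, ← Module.End.mul_apply, ← pow_add]
        apply pow_zero_of_le D _ _ _ (h0 q.1)
        simp only [φ]; omega⟩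
    have hg : LinearIndependent K g :=
      LinearIndependent.of_comp (LinearMap.ker (D ^ p)).subtype hJ
    simpa using hg.fintype_card_le_finrank
  have hB : ∑ i, (s i - p) ≤ Module.finrank K (LinearMap.range (D ^ p)) := by
    let φ : (Σ i, Fin (s i - p)) → (Σ i, Fin (s i)) :=
      fun q => ⟨q.1, ⟨p + q.2, by have := q.2.2; omega⟩⟩
    have hφ : Function.Injective φ := by
      rintro ⟨i, k⟩ ⟨j, l⟩ h
      simp only [φ, Sigma.mk.injEq] at h
      obtain ⟨rfl, h⟩ := h
      simp only [heq_eq_eq, Fin.mk.injEq] at h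
      congr 1
      exact Fin.ext (by omega)
    have hJ := hI.comp φ hφ
    let g : (Σ i, Fin (s i - p)) → LinearMap.range (D ^ p) := fun q =>
      ⟨(D ^ ((φ q).2 : ℕ)) (w q.1), by
        simp only [φ, pow_add, Module.End.mul_apply]
        exact LinearMap.mem_range_self _ _⟩
    have hg : LinearIndependent K g :=
      LinearIndependent.of_comp (LinearMap.range (D ^ p)).subtype hJ
    simpa using hg.fintype_card_le_finrank
  have hC := LinearMap.finrank_range_add_finrank_ker (D ^ p)
  have hS : ∑ i, s i = ∑ i, min p (s i) + ∑ i, (s i - p) := by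
    rw [← Finset.sum_add_distrib]
    exact Finset.sum_congr rfl fun i _ => by omega
  omega

theorem chain_nilp [FiniteDimensional K V] {v : ℕ} (D : Module.End K V) (w : Fin v → V)
    (s : Fin v → ℕ)
    (h0 : ∀ i, (D ^ (s i)) (w i) = 0)
    (hli : LinearIndependent K fun i => (D ^ (s i - 1)) (w i))
    (hdim : Module.finrank K V = ∑ i, s i) : IsNilpotent D := by
  refine ⟨∑ i, s i, ?_⟩
  have h := chain_dims D w s h0 hli hdim (∑ i, s i)
  have h2 : ∑ j, min (∑ i, s i) (s j) = ∑ i, s i := Finset.sum_congr rfl fun i _ =>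
    min_eq_right (Finset.single_le_sum (f := s) (fun _ _ => Nat.zero_le _) (mem_univ i))
  rw [h2, ← hdim] at h
  exact LinearMap.ker_eq_top.mp (Submodule.eq_top_of_finrank_eq (by rw [hdim] at *; exact h))

/-- coordinate functionals -/
theorem exists_coord [FiniteDimensional K V] (u : ℕ) (hu : Module.finrank K V = u) 
    (X : Module.End K V) (e0 : V) (h0 : (X ^ u) e0 = 0) (h1 : (X ^ (u - 1)) e0 ≠ 0) :
    ∃ ξ : ℕ → (V →ₗ[K] K), ∀ a b, a < u → ξ a ((X ^ b) e0) = if b = a then 1 else 0 := by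
  have hI := chain_indep (v := 1) X (fun _ => e0) (fun _ => u) (fun _ => h0)
    (by rw [linearIndependent_unique_iff]; exact h1)
  have hJ := hI.comp (fun k : Fin u => (⟨0, k⟩ : Σ _ : Fin 1, Fin u)) (by
    intro a b h; simpa using h)
  haveI : Nonempty (Fin u) := ⟨⟨0, by
    rcases Nat.eq_zero_or_pos u with h | h
    · subst h; exact absurd h0 h1
    · exact h⟩⟩
  let B := basisOfLinearIndependentOfCardEqFinrank hJ (by simp [hu])
  refine ⟨fun a => if h : a < u then B.coord ⟨a, h⟩ else 0, ?_⟩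
  intro a b ha
  simp only [ha, dif_pos]
  by_cases hb : b < u
  · have : (X ^ b) e0 = B ⟨b, hb⟩ := by simp [B]
    rw [this, Module.Basis.coord_apply, Module.Basis.repr_self, Finsupp.single_apply]
    simp
  · rw [pow_zero_of_le X _ _ _ h0 (by omega), map_zero, if_neg (by omega)]
end chains

section ext
variable {U : Type*} [AddCommGroup U] [Module ℂ U]

/-- wedge -/
noncomputable def wd (x y : U) : ⋀[ℂ]^2 U := exteriorPower.ιMulti ℂ 2 ![x, y]

theorem wd_zero_left (y : U) : wd 0 y = 0 := 
  (exteriorPower.ιMulti ℂ 2).map_coord_zero 0 rfl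

theorem wd_zero_right (y : U) : wd y 0 = 0 := 
  (exteriorPower.ιMulti ℂ 2).map_coord_zero 1 rfl

/-- homogeneous elements -/
noncomputable def psi (e : ℕ → U) (t : ℕ) (f : Polynomial ℂ) : ⋀[ℂ]^2 U :=
  ∑ a ∈ range (t + 1), f.coeff a • wd (e a) (e (t - a))

theorem D_psi (X : Module.End ℂ U) (D : Module.End ℂ (⋀[ℂ]^2 U)) 
    (hD : ∀ x y, D (wd x y) = wd (X x) y + wd x (X y)) (e : ℕ → U) (he : ∀ a, X (e a) = e (a + 1))
    (t : ℕ) (f : Polynomial ℂ) (hf : f.natDegree ≤ t) :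
    D (psi e t f) = psi e (t + 1) ((Polynomial.X + 1) * f) := by
  have h1 : psi e (t + 1) ((Polynomial.X + 1) * f) = 
      ∑ a ∈ range (t + 2), (Polynomial.X * f).coeff a • wd (e a) (e (t + 1 - a)) + 
      ∑ a ∈ range (t + 2), f.coeff a • wd (e a) (e (t + 1 - a)) := by
    rw [psi, ← Finset.sum_add_distrib]
    refine Finset.sum_congr rfl fun a _ => ?_
    rw [add_mul, one_mul, Polynomial.coeff_add, add_smul]
  rw [h1, Finset.sum_range_succ', Finset.sum_range_succ (fun a => f.coeff a • _) (t + 1),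
    Polynomial.coeff_eq_zero_of_natDegree_lt (show f.natDegree < t + 1 by omega)]
  simp only [Polynomial.coeff_X_mul, Polynomial.coeff_X_mul_zero, zero_smul, add_zero]
  rw [← Finset.sum_add_distrib, psi, map_sum]
  refine Finset.sum_congr rfl fun a ha => ?_
  rw [mem_range] at ha
  rw [map_smul, hD, smul_add, he, he, show t - a + 1 = t + 1 - a by omega, 
    show t + 1 - (a + 1) = t - a by omega]

theorem Dpow_psi (X : Module.End ℂ U) (D : Module.End ℂ (⋀[ℂ]^2 U)) 
    (hD : ∀ x y, D (wd x y) = wd (X x) y + wd x (X y)) (e : ℕ → U) (he : ∀ a, X (e a) = e (a + 1))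
    (t : ℕ) (f : Polynomial ℂ) (hf : f.natDegree ≤ t) (p : ℕ) :
    (D ^ p) (psi e t f) = psi e (p + t) ((Polynomial.X + 1) ^ p * f) := by
  induction p with
  | zero => simp
  | succ p ih =>
    rw [pow_succ', Module.End.mul_apply, ih, D_psi X D hD e he, pow_succ', mul_assoc,
      show p + 1 + t = p + t + 1 by omega]
    refine Polynomial.natDegree_mul_le.trans ?_
    have : ((Polynomial.X + 1 : Polynomial ℂ) ^ p).natDegree ≤ p := by
      refine (Polynomial.natDegree_pow_le).trans ?_
      have : (Polynomial.X + 1 : Polynomial ℂ).natDegree ≤ 1 := by compute_degree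
      nlinarith
    omega

theorem exists_lam (u : ℕ) (e : ℕ → U) (ξ : ℕ → (U →ₗ[ℂ] ℂ)) 
    (hξ : ∀ a b, a < u → ξ a (e b) = if b = a then 1 else 0) (a b : ℕ) (ha : a < u) (hb : b < u) :
    ∃ lam : (⋀[ℂ]^2 U) →ₗ[ℂ] ℂ, ∀ t f, lam (psi e t f) = 
      if t = a + b then f.coeff a - f.coeff b else 0 := by
  let A : U [⋀^Fin 2]→ₗ[ℂ] ℂ := 
    (Matrix.detRowAlternating (R := ℂ) (n := Fin 2)).compLinearMap (LinearMap.pi ![ξ a, ξ b])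
  have hA : ∀ x y, A ![x, y] = ξ a x * ξ b y - ξ b x * ξ a y := by
    intro x y
    simp only [A, AlternatingMap.compLinearMap_apply]
    change Matrix.det (Matrix.of fun i => (LinearMap.pi ![ξ a, ξ b]) (![x, y] i)) = _
    rw [Matrix.det_fin_two]
    simp
  refine ⟨exteriorPower.alternatingMapLinearEquiv A, ?_⟩
  intro t f
  rw [psi, map_sum]
  have h1 : ∀ k, k ∈ range (t + 1) → exteriorPower.alternatingMapLinearEquiv A 
     (f.coeff k • wd (e k) (e (t - k))) = 
      (if k = a then (if t = a + b then f.coeff a else 0) else 0) - 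
      (if k = b then (if t = a + b then f.coeff b else 0) else 0) := by
    intro k hk
    rw [mem_range] at hk
    rw [map_smul, wd, exteriorPower.alternatingMapLinearEquiv_apply_ιMulti, hA, hξ _ _ ha,
      hξ _ _ ha, hξ _ _ hb, hξ _ _ hb, smul_eq_mul, mul_sub]
    congr 1
    · by_cases h : k = a
      · have : (t - k = b) ↔ t = a + b := by omega
        simp [h, ← this]
      · simp [h]
    · by_cases h : k = b
      · have : (t - k = a) ↔ t = a + b := by omega
        simp [h, ← this]
      · simp [h]
  rw [Finset.sum_congr rfl h1, Finset.sum_sub_distrib, Finset.sum_ite_eq', Finset.sum_ite_eq']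
  by_cases h : t = a + b
  · rw [if_pos (mem_range.mpr (by omega)), if_pos (mem_range.mpr (by omega))]
    simp [h]
  · simp [h]
end ext

theorem ch_even (v : ℕ) : (2 * v).choose 2 = ∑ j ∈ range v, (4 * j + 1) := by
  induction v with
  | zero => simp
  | succ v ih =>
    rw [sum_range_succ, ← ih, show 2 * (v + 1) = 2 * v + 1 + 1 by ring]
    simp [Nat.choose_succ_succ]; ring

theorem ch_odd (v : ℕ) : (2 * v + 1).choose 2 = ∑ j ∈ range v, (4 * j + 3) := by
  induction v with
  | zero => simp
  | succ v ih =>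
    rw [sum_range_succ, ← ih, show 2 * (v + 1) + 1 = 2 * v + 1 + 1 + 1 by ring]
    simp [Nat.choose_succ_succ]; ring

theorem sum_choose (u v : ℕ) (h : u = 2 * v ∨ u = 2 * v + 1) :
    u.choose 2 = ∑ i : Fin v, (2 * u - 3 - 4 * (i : ℕ)) := by
  rw [Fin.sum_univ_eq_sum_range (fun i => 2 * u - 3 - 4 * i)]
  rw [← Finset.sum_range_reflect]
  rcases h with rfl | rfl
  · rw [ch_even]
    refine Finset.sum_congr rfl fun j hj => ?_
    rw [mem_range] at hj; omega
  · rw [ch_odd]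
    refine Finset.sum_congr rfl fun j hj => ?_
    rw [mem_range] at hj; omega

theorem sum_reindex (v p c : ℕ) (s : ℕ → ℕ) (hs : ∀ i < v, s i = 4 * (v - i) - c) :
    ∑ i : Fin v, min p (s i) = ∑ j ∈ Icc 1 v, min p (4 * j - c) := by
  rw [Fin.sum_univ_eq_sum_range (fun i => min p (s i))]
  refine Finset.sum_nbij' (fun i => v - i) (fun j => v - j) ?_ ?_ ?_ ?_ ?_
  · intro i hi; simp at *; omega
  · intro i hi; simp at *; omega
  · intro i hi; simp at *; omega
  · intro i hi; simp at *; omega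
  · intro i hi; rw [hs i (by simpa using hi)]
end JT

open Finset in
/-- Jordan type of the derivation extension of a regular nilpotent endomorphism to the
exterior square (Proposition 2.3): if `X` is regular nilpotent on `U` with `dim U = u ≥ 2`,
and `D` is the unique endomorphism of `⋀²U` with `D(x∧y) = Xx∧y + x∧Xy`, then `D` is
nilpotent; if `u = 2v` it has `v` Jordan blocks of sizes `1, 5, …, 2u−3`, and if
`u = 2v+1` it has `v` Jordan blocks of sizes `3, 7, …, 2u−3`. -/
theorem jordan_type_of_exterior_square_derivation
    (U : Type*) [AddCommGroup U] [Module ℂ U] [FiniteDimensional ℂ U]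
    (u : ℕ) (hu : Module.finrank ℂ U = u) (hu2 : 2 ≤ u)
    (X : Module.End ℂ U) (hX : X ^ u = 0 ∧ X ^ (u - 1) ≠ 0)
    (D : Module.End ℂ (⋀[ℂ]^2 U))
    (hD : ∀ x y : U,
      (D ⟨ExteriorAlgebra.ιMulti ℂ 2 ![x, y],
          ExteriorAlgebra.ιMulti_range ℂ 2 ⟨![x, y], rfl⟩⟩ : ⋀[ℂ]^2 U) =
        (ExteriorAlgebra.ιMulti ℂ 2 ![X x, y] : ExteriorAlgebra ℂ U) +
          ExteriorAlgebra.ιMulti ℂ 2 ![x, X y]) :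
    IsNilpotent D ∧
      (∀ v : ℕ, u = 2 * v →
        ∀ p : ℕ, Module.finrank ℂ (LinearMap.ker (D ^ p)) =
          ∑ j ∈ Icc 1 v, min p (4 * j - 3)) ∧
      (∀ v : ℕ, u = 2 * v + 1 →
        ∀ p : ℕ, Module.finrank ℂ (LinearMap.ker (D ^ p)) =
          ∑ j ∈ Icc 1 v, min p (4 * j - 1)) := by
  obtain ⟨hX0, hX1⟩ := hX
  obtain ⟨e0, he0⟩ : ∃ e0, (X ^ (u - 1)) e0 ≠ 0 := by
    by_contra! h
    exact hX1 (LinearMap.ext h)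
  have hz : (X ^ u) e0 = 0 := by rw [hX0]; rfl
  obtain ⟨ξ, hξ⟩ := JT.exists_coord u hu X e0 hz he0
  have hD' : ∀ x y, D (JT.wd x y) = JT.wd (X x) y + JT.wd x (X y) := fun x y =>
    Subtype.ext (hD x y)
  let e : ℕ → U := fun a => (X ^ a) e0
  have he : ∀ a, X (e a) = e (a + 1) := fun a => by
    simp only [e, pow_succ', Module.End.mul_apply]
  have hez : ∀ a, u ≤ a → e a = 0 := fun a ha => JT.pow_zero_of_le X e0 u a hz ha
  have main : ∀ v : ℕ, (u = 2 * v ∨ u = 2 * v + 1) → IsNilpotent D ∧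
      ∀ p : ℕ, Module.finrank ℂ (LinearMap.ker (D ^ p)) =
        ∑ i : Fin v, min p (2 * u - 3 - 4 * (i : ℕ)) := by
    intro v hv
    have hiv : ∀ i : Fin v, 2 * (i : ℕ) + 2 ≤ u := fun i => by have := i.2; omega
    choose f hf0 hfd hfr hfz using fun i : Fin v => JT.exists_f u i (hiv i)
    choose a ha1 ha2 ha3 ha4 using fun i : Fin v => JT.exists_a u i (hiv i) (f i) (hf0 i) (hfd i)
    let w : Fin v → ⋀[ℂ]^2 U := fun i => JT.psi e (2 * i + 1) (f i)
    let s : Fin v → ℕ := fun i => 2 * u - 3 - 4 * (i : ℕ)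
    have h0 : ∀ i, (D ^ (s i)) (w i) = 0 := by
      intro i
      have := hiv i
      simp only [w, s]
      rw [JT.Dpow_psi X D hD' e he _ _ (hfd i), JT.psi]
      apply Finset.sum_eq_zero
      intro k hk
      rw [mem_range] at hk
      by_cases h1 : u ≤ k
      · rw [hez k h1, JT.wd_zero_left, smul_zero]
      by_cases h2 : u ≤ 2 * u - 3 - 4 * (i : ℕ) + (2 * i + 1) - k
      · rw [hez _ h2, JT.wd_zero_right, smul_zero]
      · rw [hfz i k (by omega) (by omega) (by omega), zero_smul]
    have hw : ∀ i, (D ^ (s i - 1)) (w i) = JT.psi e (2 * u - 3 - 2 * i)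
        ((Polynomial.X + 1) ^ (2 * u - 4 - 4 * (i : ℕ)) * f i) := by
      intro i
      have := hiv i
      simp only [w, s]
      rw [JT.Dpow_psi X D hD' e he _ _ (hfd i)]
      congr 1
      · omega
      · congr 2
        omega
    have hli : LinearIndependent ℂ fun i => (D ^ (s i - 1)) (w i) := by
      rw [Fintype.linearIndependent_iff]
      intro c hc i
      simp only [hw] at hc
      obtain ⟨lam, hlam⟩ := JT.exists_lam u e ξ hξ (a i) (2 * u - 3 - 2 * i - a i)
        (ha1 i) (ha3 i)
      have h1 := congrArg lam hc
      rw [map_sum, map_zero, Finset.sum_eq_single i] at h1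
      · have hanti := JT.anti_mul (2 * i + 1) (2 * u - 4 - 4 * (i : ℕ)) (f i) (hfd i) (hfr i)
        have := hiv i
        rw [show 2 * u - 4 - 4 * (i : ℕ) + (2 * i + 1) = 2 * u - 3 - 2 * i by omega] at hanti
        have hac := JT.anti_coeff _ _ hanti (a i) (ha2 i)
        rw [map_smul, hlam, if_pos (by have := ha2 i; omega), hac, sub_neg_eq_add, ← two_mul,
          smul_eq_mul] at h1
        rcases mul_eq_zero.mp h1 with h | h
        · exact h
        · exact absurd h (mul_ne_zero two_ne_zero (ha4 i))
      · intro j _ hji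
        have hne : (j : ℕ) ≠ i := fun h => hji (Fin.ext h)
        have := hiv i
        have := hiv j
        have := ha2 i
        rw [map_smul, hlam, if_neg (by omega), smul_zero]
      · simp
    have hdim : Module.finrank ℂ (⋀[ℂ]^2 U) = ∑ i, s i := by
      rw [exteriorPower.finrank_eq, hu, JT.sum_choose u v hv]
    exact ⟨JT.chain_nilp D w s h0 hli hdim, JT.chain_dims D w s h0 hli hdim⟩
  refine ⟨(main (u / 2) (by omega)).1, ?_, ?_⟩
  · intro v hv p
    rw [(main v (Or.inl hv)).2 p]
    exact JT.sum_reindex v p 3 (fun i => 2 * u - 3 - 4 * i) (fun i hi => by omega)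
  · intro v hv p
    rw [(main v (Or.inr hv)).2 p]
    exact JT.sum_reindex v p 1 (fun i => 2 * u - 3 - 4 * i) (fun i hi => by omega)
end

section
/- Let t₁, …, t₆ ∈ ℂ be nonzero and pairwise distinct, and suppose that t₁t₂ = t₃t₄ = t₅t₆ and t₁t₃ = t₂t₅ = t₄t₆. Then there exists j ∈ ℂ with j² + j + 1 = 0 such that t₄ = j·t₁, t₅ = j²·t₁, t₂ = j·t₃, and t₆ = j²·t₃. In particular the further triple coincidence t₁t₆ = t₂t₄ = t₃t₅ holds automatically. -/
/-- Genus 8, regular case (g8.1): if nonzero pairwise distinct `t₁,…,t₆ ∈ ℂ` satisfy the two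
triple coincidences `t₁t₂ = t₃t₄ = t₅t₆` and `t₁t₃ = t₂t₅ = t₄t₆`, then for some primitive
cube root of unity `j` one has `t₄ = j t₁`, `t₅ = j² t₁`, `t₂ = j t₃`, `t₆ = j² t₃`; in
particular the third triple coincidence `t₁t₆ = t₂t₄ = t₃t₅` also holds. -/
theorem genus8_regular_triple_collapsings
    (t : Fin 6 → ℂ) (ht0 : ∀ i, t i ≠ 0) (htinj : Function.Injective t)
    (h1 : t 0 * t 1 = t 2 * t 3) (h2 : t 2 * t 3 = t 4 * t 5)
    (h3 : t 0 * t 2 = t 1 * t 4) (h4 : t 1 * t 4 = t 3 * t 5) :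
    ∃ j : ℂ, j ^ 2 + j + 1 = 0 ∧
      t 3 = j * t 0 ∧ t 4 = j ^ 2 * t 0 ∧ t 1 = j * t 2 ∧ t 5 = j ^ 2 * t 2 ∧
      (t 0 * t 5 = t 1 * t 3 ∧ t 1 * t 3 = t 2 * t 4) := by
  have a0 := ht0 0
  have c0 := ht0 2
  have d0 := ht0 3
  have hne : t 3 ≠ t 0 := fun h => absurd (htinj h) (by decide)
  obtain ⟨j, hj⟩ : ∃ j, t 3 = j * t 0 := ⟨t 3 / t 0, by field_simp⟩
  have j0 : j ≠ 0 := by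
    rintro rfl
    exact d0 (by rw [hj, zero_mul])
  have j1 : j - 1 ≠ 0 := by
    intro h
    apply hne
    rw [hj]
    linear_combination t 0 * h
  have e1 : t 1 = j * t 2 := by
    apply mul_left_cancel₀ a0
    rw [h1, hj]; ring
  have e4 : j * t 4 = t 0 := by
    apply mul_left_cancel₀ c0
    rw [e1] at h3
    linear_combination -h3
  have e5 : j * t 5 = t 2 := by
    apply mul_left_cancel₀ a0
    rw [hj] at h4
    linear_combination -h4 - h3
  have j3 : j ^ 3 = 1 := by
    apply mul_left_cancel₀ (mul_ne_zero a0 c0)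
    rw [hj] at h2
    linear_combination j ^ 2 * h2 + j * t 5 * e4 + t 0 * e5
  have jj : j ^ 2 + j + 1 = 0 := by
    apply mul_left_cancel₀ j1
    linear_combination j3
  have f4 : t 4 = j ^ 2 * t 0 := by linear_combination j ^ 2 * e4 - t 4 * j3
  have f5 : t 5 = j ^ 2 * t 2 := by linear_combination j ^ 2 * e5 - t 5 * j3
  refine ⟨j, jj, hj, f4, e1, f5, ?_, ?_⟩
  · rw [f5, e1, hj]; ring
  · rw [f4, e1, hj]; ring
end

section
/- Let V = ℂ⁶ with basis e₁, …, e₆, let w = e₁∧e₆ + e₂∧e₅ + e₃∧e₄ ∈ ⋀²V, and let W ⊆ ⋀³V be the kernel of the linear map ⋀³V → ⋀⁵V given by α ↦ w ∧ α. Let X be the endomorphism of V with X e₁ = 0, X e₂ = e₁, X e₃ = e₂, X e₄ = e₃, X e₅ = −e₄, X e₆ = −e₅, and let D_X be the derivation extension of X to ⋀³V. Then W has dimension 14, D_X(W) ⊆ W, and the restriction Z of D_X to W is nilpotent with Jordan type (10, 4), i.e. dim ker(Z^p) = min(p,10) + min(p,4) for all p ≥ 0. -/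
set_option synthInstance.maxHeartbeats 4000000
set_option maxHeartbeats 1000000
set_option maxSynthPendingDepth 3
set_option linter.all false
set_option linter.unusedSimpArgs false

theorem chain_indep {K U : Type*} [Field K] [AddCommGroup U] [Module K U] (D : Module.End K U)
    (v u : U) (hv : (D ^ 10) v = 0) (hu : (D ^ 4) u = 0)
    (hi : ∀ a b : K, a • (D ^ 9) v + b • (D ^ 3) u = 0 → a = 0 ∧ b = 0) :
    LinearIndependent K (Sum.elim (fun i : Fin 10 => (D ^ (i : ℕ)) v)
      (fun i : Fin 4 => (D ^ (i : ℕ)) u)) := by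
  have hv' : ∀ k, 10 ≤ k → (D ^ k) v = 0 := fun k hk => by
    obtain ⟨m, rfl⟩ := Nat.exists_eq_add_of_le' hk
    rw [pow_add, Module.End.mul_apply, hv, map_zero]
  have hu' : ∀ k, 4 ≤ k → (D ^ k) u = 0 := fun k hk => by
    obtain ⟨m, rfl⟩ := Nat.exists_eq_add_of_le' hk
    rw [pow_add, Module.End.mul_apply, hu, map_zero]
  rw [Fintype.linearIndependent_iff]
  intro g hg
  rw [Fintype.sum_sum_type] at hg
  simp only [Sum.elim_inl, Sum.elim_inr] at hg
  -- heights
  have key : ∀ n : ℕ, (∀ i : Fin 10, (i : ℕ) < n → g (Sum.inl i) = 0) ∧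
      (∀ i : Fin 4, (i : ℕ) + 6 < n → g (Sum.inr i) = 0) := by
    intro n
    induction n with
    | zero => simp
    | succ n ih =>
      obtain ⟨ih1, ih2⟩ := ih
      by_cases hn : n < 10
      · have h := congrArg (D ^ (9 - n)) hg
        simp only [map_add, map_sum, map_smul, map_zero, ← Module.End.mul_apply, ← pow_add] at h
        rw [Finset.sum_eq_single (⟨n, hn⟩ : Fin 10)] at h
        rotate_left
        · intro b _ hb
          rcases lt_or_gt_of_ne (fun hh => hb (Fin.ext hh) : (b : ℕ) ≠ n) with h1 | h1
          · rw [ih1 b h1, zero_smul]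
          · rw [hv' _ (by omega), smul_zero]
        · simp
        have e9 : 9 - n + n = 9 := by omega
        simp only [e9] at h
        by_cases h6 : 6 ≤ n
        · rw [Finset.sum_eq_single (⟨n - 6, by omega⟩ : Fin 4)] at h
          rotate_left
          · intro b _ hb
            rcases lt_or_gt_of_ne (fun hh => hb (Fin.ext hh) : (b : ℕ) ≠ n - 6) with h1 | h1
            · rw [ih2 b (by omega), zero_smul]
            · rw [hu' _ (by omega), smul_zero]
          · simp
          have e3 : 9 - n + (n - 6) = 3 := by omega
          simp only [e3] at h
          obtain ⟨ha, hb⟩ := hi _ _ h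
          constructor
          · intro i hin
            rcases Nat.lt_succ_iff_lt_or_eq.mp hin with h1 | h1
            · exact ih1 i h1
            · have : i = ⟨n, hn⟩ := Fin.ext h1
              rw [this, ha]
          · intro i hin
            rcases Nat.lt_succ_iff_lt_or_eq.mp hin with h1 | h1
            · exact ih2 i h1
            · have : i = ⟨n - 6, by omega⟩ := Fin.ext (by simp; omega)
              rw [this, hb]
        · rw [Finset.sum_eq_zero] at h
          swap
          · intro b _
            rw [hu' _ (by omega), smul_zero]
          obtain ⟨ha, -⟩ := hi (g (Sum.inl ⟨n, hn⟩)) 0 (by rw [zero_smul]; exact h)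
          constructor
          · intro i hin
            rcases Nat.lt_succ_iff_lt_or_eq.mp hin with h1 | h1
            · exact ih1 i h1
            · have : i = ⟨n, hn⟩ := Fin.ext h1
              rw [this, ha]
          · intro i hin
            omega
      · exact ⟨fun i _ => ih1 i (by omega), fun i _ => ih2 i (by omega)⟩
  rintro (i | i)
  · exact (key 10).1 i i.2
  · exact (key 10).2 i (by omega)

/-- Jordan type from two chains. -/
theorem jordan_aux {K U : Type*} [Field K] [AddCommGroup U] [Module K U] [FiniteDimensional K U]
    (D : Module.End K U) (hd : Module.finrank K U = 14)
    (v u : U) (hv : (D ^ 10) v = 0) (hu : (D ^ 4) u = 0)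
    (hi : LinearIndependent K (Sum.elim (fun i : Fin 10 => (D ^ (i : ℕ)) v)
      (fun i : Fin 4 => (D ^ (i : ℕ)) u))) (p : ℕ) :
    Module.finrank K (LinearMap.ker (D ^ p)) = min p 10 + min p 4 := by
  have hv' : ∀ k, 10 ≤ k → (D ^ k) v = 0 := fun k hk => by
    obtain ⟨m, rfl⟩ := Nat.exists_eq_add_of_le' hk
    rw [pow_add, Module.End.mul_apply, hv, map_zero]
  have hu' : ∀ k, 4 ≤ k → (D ^ k) u = 0 := fun k hk => by
    obtain ⟨m, rfl⟩ := Nat.exists_eq_add_of_le' hk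
    rw [pow_add, Module.End.mul_apply, hu, map_zero]
  have h1 : min p 10 + min p 4 ≤ Module.finrank K (LinearMap.ker (D ^ p)) := by
    let f : Fin (min p 10) ⊕ Fin (min p 4) → Fin 10 ⊕ Fin 4 :=
      Sum.map (fun i => ⟨10 - min p 10 + i, by omega⟩) (fun i => ⟨4 - min p 4 + i, by omega⟩)
    have hf : Function.Injective f := by
      apply Sum.map_injective.2
      constructor <;> (intro a b hab; simp only [Fin.mk.injEq] at hab; exact Fin.ext (by omega))
    have h2 := hi.comp f hf
    have h3 := finrank_span_eq_card h2
    rw [Fintype.card_sum, Fintype.card_fin, Fintype.card_fin] at h3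
    rw [← h3]
    apply Submodule.finrank_mono
    rw [Submodule.span_le]
    rintro _ ⟨i | i, rfl⟩
    · simp only [f, Function.comp, Sum.map_inl, Sum.elim_inl, SetLike.mem_coe, LinearMap.mem_ker,
        ← Module.End.mul_apply, ← pow_add]
      exact hv' _ (by omega)
    · simp only [f, Function.comp, Sum.map_inr, Sum.elim_inr, SetLike.mem_coe, LinearMap.mem_ker,
        ← Module.End.mul_apply, ← pow_add]
      exact hu' _ (by omega)
  have h2 : (10 - p) + (4 - p) ≤ Module.finrank K (LinearMap.range (D ^ p)) := by
    let f : Fin (10 - p) ⊕ Fin (4 - p) → Fin 10 ⊕ Fin 4 :=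
      Sum.map (fun i => ⟨p + i, by omega⟩) (fun i => ⟨p + i, by omega⟩)
    have hf : Function.Injective f := by
      apply Sum.map_injective.2
      constructor <;> (intro a b hab; simp only [Fin.mk.injEq] at hab; exact Fin.ext (by omega))
    have h2 := hi.comp f hf
    have h3 := finrank_span_eq_card h2
    rw [Fintype.card_sum, Fintype.card_fin, Fintype.card_fin] at h3
    rw [← h3]
    apply Submodule.finrank_mono
    rw [Submodule.span_le]
    rintro _ ⟨i | i, rfl⟩
    · exact ⟨(D ^ (i : ℕ)) v, by
        simp only [f, Function.comp, Sum.map_inl, Sum.elim_inl, ← Module.End.mul_apply, ← pow_add]⟩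
    · exact ⟨(D ^ (i : ℕ)) u, by
        simp only [f, Function.comp, Sum.map_inr, Sum.elim_inr, ← Module.End.mul_apply, ← pow_add]⟩
  have h3 := LinearMap.finrank_range_add_finrank_ker (D ^ p)
  omega

theorem jordan {K U A : Type*} [Field K] [AddCommGroup U] [Module K U] [FiniteDimensional K U]
    [AddCommGroup A] [Module K A]
    (D : Module.End K U) (L : U →ₗ[K] A) (hU : Module.finrank K U = 20)
    (v u : U) (hvL : ∀ i < 10, L ((D ^ i) v) = 0) (huL : ∀ i < 4, L ((D ^ i) u) = 0)
    (hv : (D ^ 10) v = 0) (hu : (D ^ 4) u = 0)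
    (hi : ∀ a b : K, a • (D ^ 9) v + b • (D ^ 3) u = 0 → a = 0 ∧ b = 0)
    (q : Fin 6 → U) (hq : LinearIndependent K (fun i => L (q i)))
    (W : Submodule K U) (hW : W = LinearMap.ker L) :
    Module.finrank K W = 14 ∧
      ∃ hinv : ∀ x ∈ W, D x ∈ W,
        IsNilpotent (D.restrict hinv) ∧
          ∀ p : ℕ, Module.finrank K (LinearMap.ker ((D.restrict hinv) ^ p)) =
            min p 10 + min p 4 := by
  subst hW
  have hci := chain_indep D v u hv hu hi
  have hcard := finrank_span_eq_card hci
  rw [Fintype.card_sum, Fintype.card_fin, Fintype.card_fin] at hcard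
  set S := Submodule.span K (Set.range (Sum.elim (fun i : Fin 10 => (D ^ (i : ℕ)) v)
      (fun i : Fin 4 => (D ^ (i : ℕ)) u))) with hS
  have hle : S ≤ LinearMap.ker L := by
    rw [hS, Submodule.span_le]
    rintro _ ⟨i | i, rfl⟩
    · exact hvL i i.2
    · exact huL i i.2
  have hrk : 6 ≤ Module.finrank K (LinearMap.range L) := by
    have h3 := finrank_span_eq_card hq
    rw [Fintype.card_fin] at h3
    rw [← h3]
    apply Submodule.finrank_mono
    rw [Submodule.span_le]
    rintro _ ⟨i, rfl⟩
    exact ⟨q i, rfl⟩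
  have hrn := LinearMap.finrank_range_add_finrank_ker L
  have hm := Submodule.finrank_mono hle
  have h14 : Module.finrank K (LinearMap.ker L) = 14 := by omega
  have hSe : S = LinearMap.ker L := Submodule.eq_of_le_of_finrank_eq hle (by omega)
  have hv0 : L v = 0 := by simpa using hvL 0 (by norm_num)
  have hu0 : L u = 0 := by simpa using huL 0 (by norm_num)
  have hinv : ∀ x ∈ LinearMap.ker L, D x ∈ LinearMap.ker L := by
    rw [← hSe]
    intro x hx
    have : S ≤ S.comap D := by
      conv_lhs => rw [hS]
      rw [Submodule.span_le]
      rintro _ ⟨i | i, rfl⟩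
      · simp only [Sum.elim_inl, SetLike.mem_coe, Submodule.mem_comap]
        rw [← Module.End.mul_apply, ← pow_succ', hSe, LinearMap.mem_ker]
        by_cases h : (i : ℕ) + 1 < 10
        · exact hvL _ h
        · rw [show (i : ℕ) + 1 = 10 by omega, hv, map_zero]
      · simp only [Sum.elim_inr, SetLike.mem_coe, Submodule.mem_comap]
        rw [← Module.End.mul_apply, ← pow_succ', hSe, LinearMap.mem_ker]
        by_cases h : (i : ℕ) + 1 < 4
        · exact huL _ h
        · rw [show (i : ℕ) + 1 = 4 by omega, hu, map_zero]
    exact this hx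
  have hcoe : ∀ (n : ℕ) (z : LinearMap.ker L), (((D.restrict hinv) ^ n) z : U) = (D ^ n) z := by
    intro n z
    rw [Module.End.pow_restrict, LinearMap.coe_restrict_apply]
  have hmain : ∀ p : ℕ, Module.finrank K (LinearMap.ker ((D.restrict hinv) ^ p)) =
      min p 10 + min p 4 := by
    apply jordan_aux (D.restrict hinv) h14 ⟨v, hv0⟩ ⟨u, hu0⟩
    · apply Subtype.ext
      rw [hcoe]; exact hv
    · apply Subtype.ext
      rw [hcoe]; exact hu
    · apply LinearIndependent.of_comp (LinearMap.ker L).subtype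
      convert hci using 1
      funext i
      rcases i with i | i
      · exact hcoe _ _
      · exact hcoe _ _
  refine ⟨h14, hinv, ⟨10, ?_⟩, hmain⟩
  have h := hmain 10
  rw [← LinearMap.ker_eq_top]
  apply Submodule.eq_top_of_finrank_eq
  rw [h, h14]
  norm_num

theorem li_congr {K M I : Type*} [Field K] [AddCommGroup M] [Module K M] {v w : I → M}
    (hv : LinearIndependent K v) (h : ∀ i, v i = w i) : LinearIndependent K w := by
  rwa [← funext h]

theorem upd0 {M : Type*} (a b c d : M) : Function.update ![a, b, c] 0 d = ![d, b, c] := by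
  ext i; fin_cases i <;> rfl

theorem upd1 {M : Type*} (a b c d : M) : Function.update ![a, b, c] 1 d = ![a, d, c] := by
  ext i; fin_cases i <;> rfl

theorem upd2 {M : Type*} (a b c d : M) : Function.update ![a, b, c] 2 d = ![a, b, d] := by
  ext i; fin_cases i <;> rfl

theorem core {U A : Type*} [AddCommGroup U] [Module ℂ U] [FiniteDimensional ℂ U] [Ring A] [Algebra ℂ A]
    (c : U →ₗ[ℂ] A) (hc : Function.Injective c) (hU : Module.finrank ℂ U = 20)
    (x y : Fin 6 → A) (hs : ∀ i, x i * x i = 0) (ha : ∀ i j, x i * x j = -(x j * x i))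
    (y0 : y 0 = 0) (y1 : y 1 = x 0) (y2 : y 2 = x 1) (y3 : y 3 = x 2) (y4 : y 4 = -x 3) (y5 : y 5 = -x 4)
    (T : Fin 6 → Fin 6 → Fin 6 → U) (hT : ∀ i j k, c (T i j k) = x i * x j * x k)
    (D : Module.End ℂ U)
    (hDT : ∀ i j k, c (D (T i j k)) = y i * x j * x k + x i * y j * x k + x i * x j * y k)
    (L : U →ₗ[ℂ] A) (hL : ∀ z, L z = (x 0 * x 5 + x 1 * x 4 + x 2 * x 3) * c z)
    (i3 : LinearIndependent ℂ ![x 0 * x 1 * x 2, x 0 * x 1 * x 5, x 0 * x 2 * x 4, x 1 * x 2 * x 3])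
    (i5 : LinearIndependent ℂ ![x 0 * x 1 * x 2 * x 3 * x 4, x 0 * x 1 * x 2 * x 3 * x 5,
      x 0 * x 1 * x 2 * x 4 * x 5, x 0 * x 1 * x 3 * x 4 * x 5, x 0 * x 2 * x 3 * x 4 * x 5,
      x 1 * x 2 * x 3 * x 4 * x 5])
    (W : Submodule ℂ U) (hW : W = LinearMap.ker L) :
    Module.finrank ℂ W = 14 ∧
      ∃ hinv : ∀ x ∈ W, D x ∈ W,
        IsNilpotent (D.restrict hinv) ∧
          ∀ p : ℕ, Module.finrank ℂ (LinearMap.ker ((D.restrict hinv) ^ p)) =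
            min p 10 + min p 4 := by
  have hsl : ∀ i z, x i * (x i * z) = 0 := fun i z => by rw [← mul_assoc, hs, zero_mul]
  have hal : ∀ i j z, x i * (x j * z) = -(x j * (x i * z)) := fun i j z => by
    rw [← mul_assoc, ha, neg_mul, mul_assoc]
  have hlt : ∀ i j, j < i → x i * x j = -(x j * x i) := fun i j _ => ha i j
  have hltl : ∀ i j z, j < i → x i * (x j * z) = -(x j * (x i * z)) := fun i j z _ => hal i j z
  have dd : D (T 0 1 2) = 0 ∧
      D (T 0 1 3) = (1:ℂ) • T 0 1 2 ∧
      D (T 0 1 4) = (-1:ℂ) • T 0 1 3 ∧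
      D (T 0 1 5) = (-1:ℂ) • T 0 1 4 ∧
      D (T 0 2 3) = (1:ℂ) • T 0 1 3 ∧
      D (T 0 2 4) = (1:ℂ) • T 0 1 4 + (-1:ℂ) • T 0 2 3 ∧
      D (T 0 2 5) = (1:ℂ) • T 0 1 5 + (-1:ℂ) • T 0 2 4 ∧
      D (T 0 3 4) = (1:ℂ) • T 0 2 4 ∧
      D (T 0 3 5) = (1:ℂ) • T 0 2 5 + (-1:ℂ) • T 0 3 4 ∧
      D (T 0 4 5) = (-1:ℂ) • T 0 3 5 ∧
      D (T 1 2 3) = (1:ℂ) • T 0 2 3 ∧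
      D (T 1 2 4) = (1:ℂ) • T 0 2 4 + (-1:ℂ) • T 1 2 3 ∧
      D (T 1 2 5) = (1:ℂ) • T 0 2 5 + (-1:ℂ) • T 1 2 4 ∧
      D (T 1 3 4) = (1:ℂ) • T 0 3 4 + (1:ℂ) • T 1 2 4 ∧
      D (T 1 3 5) = (1:ℂ) • T 0 3 5 + (1:ℂ) • T 1 2 5 + (-1:ℂ) • T 1 3 4 ∧
      D (T 1 4 5) = (1:ℂ) • T 0 4 5 + (-1:ℂ) • T 1 3 5 ∧
      D (T 2 3 4) = (1:ℂ) • T 1 3 4 ∧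
      D (T 2 3 5) = (1:ℂ) • T 1 3 5 + (-1:ℂ) • T 2 3 4 ∧
      D (T 2 4 5) = (1:ℂ) • T 1 4 5 + (-1:ℂ) • T 2 3 5 ∧
      D (T 3 4 5) = (1:ℂ) • T 2 4 5 := by
    and_intros <;> apply hc <;>
    simp [hDT, hT, y0, y1, y2, y3, y4, y5, mul_assoc, hs, hsl, hlt, hltl] <;> try module
  have ll : L (T 0 1 2) = 0 ∧
      L (T 0 1 3) = 0 ∧
      L (T 0 1 4) = (1:ℂ) • (x 0 * x 1 * x 2 * x 3 * x 4) ∧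
      L (T 0 1 5) = (1:ℂ) • (x 0 * x 1 * x 2 * x 3 * x 5) ∧
      L (T 0 2 3) = (1:ℂ) • (x 0 * x 1 * x 2 * x 3 * x 4) ∧
      L (T 0 2 4) = 0 ∧
      L (T 0 2 5) = (-1:ℂ) • (x 0 * x 1 * x 2 * x 4 * x 5) ∧
      L (T 0 3 4) = 0 ∧
      L (T 0 3 5) = (-1:ℂ) • (x 0 * x 1 * x 3 * x 4 * x 5) ∧
      L (T 0 4 5) = (1:ℂ) • (x 0 * x 2 * x 3 * x 4 * x 5) ∧
      L (T 1 2 3) = (-1:ℂ) • (x 0 * x 1 * x 2 * x 3 * x 5) ∧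
      L (T 1 2 4) = (-1:ℂ) • (x 0 * x 1 * x 2 * x 4 * x 5) ∧
      L (T 1 2 5) = 0 ∧
      L (T 1 3 4) = (-1:ℂ) • (x 0 * x 1 * x 3 * x 4 * x 5) ∧
      L (T 1 3 5) = 0 ∧
      L (T 1 4 5) = (1:ℂ) • (x 1 * x 2 * x 3 * x 4 * x 5) ∧
      L (T 2 3 4) = (-1:ℂ) • (x 0 * x 2 * x 3 * x 4 * x 5) ∧
      L (T 2 3 5) = (1:ℂ) • (x 1 * x 2 * x 3 * x 4 * x 5) ∧
      L (T 2 4 5) = 0 ∧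
      L (T 3 4 5) = 0 := by
    and_intros <;> rw [hL, hT] <;>
    simp [add_mul, mul_assoc, hs, hsl, hlt, hltl] <;> try module
  obtain ⟨v, vp0⟩ : ∃ v, v = (1:ℂ) • T 3 4 5 := ⟨_, rfl⟩
  have vq0 : (D ^ 0) v = (1:ℂ) • T 3 4 5 := by rw [pow_zero, Module.End.one_apply, vp0]
  have vp1 : (D ^ 1) v = (1:ℂ) • T 2 4 5 := by
    rw [pow_succ', Module.End.mul_apply, pow_zero, Module.End.one_apply, vp0]; simp only [map_add, map_smul, dd]; module
  have vp2 : (D ^ 2) v = (1:ℂ) • T 1 4 5 + (-1:ℂ) • T 2 3 5 := by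
    rw [pow_succ', Module.End.mul_apply, vp1]; simp only [map_add, map_smul, dd]; module
  have vp3 : (D ^ 3) v = (1:ℂ) • T 0 4 5 + (-2:ℂ) • T 1 3 5 + (1:ℂ) • T 2 3 4 := by
    rw [pow_succ', Module.End.mul_apply, vp2]; simp only [map_add, map_smul, dd]; module
  have vp4 : (D ^ 4) v = (-3:ℂ) • T 0 3 5 + (-2:ℂ) • T 1 2 5 + (3:ℂ) • T 1 3 4 := by
    rw [pow_succ', Module.End.mul_apply, vp3]; simp only [map_add, map_smul, dd]; module
  have vp5 : (D ^ 5) v = (-5:ℂ) • T 0 2 5 + (6:ℂ) • T 0 3 4 + (5:ℂ) • T 1 2 4 := by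
    rw [pow_succ', Module.End.mul_apply, vp4]; simp only [map_add, map_smul, dd]; module
  have vp6 : (D ^ 6) v = (-5:ℂ) • T 0 1 5 + (16:ℂ) • T 0 2 4 + (-5:ℂ) • T 1 2 3 := by
    rw [pow_succ', Module.End.mul_apply, vp5]; simp only [map_add, map_smul, dd]; module
  have vp7 : (D ^ 7) v = (21:ℂ) • T 0 1 4 + (-21:ℂ) • T 0 2 3 := by
    rw [pow_succ', Module.End.mul_apply, vp6]; simp only [map_add, map_smul, dd]; module
  have vp8 : (D ^ 8) v = (-42:ℂ) • T 0 1 3 := by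
    rw [pow_succ', Module.End.mul_apply, vp7]; simp only [map_add, map_smul, dd]; module
  have vp9 : (D ^ 9) v = (-42:ℂ) • T 0 1 2 := by
    rw [pow_succ', Module.End.mul_apply, vp8]; simp only [map_add, map_smul, dd]; module
  have vp10 : (D ^ 10) v = 0 := by
    rw [pow_succ', Module.End.mul_apply, vp9]; simp only [map_add, map_smul, dd]; module
  obtain ⟨u, up0⟩ : ∃ u, u = (8:ℂ) • T 0 4 5 + (5:ℂ) • T 1 3 5 + (8:ℂ) • T 2 3 4 := ⟨_, rfl⟩
  have uq0 : (D ^ 0) u = (8:ℂ) • T 0 4 5 + (5:ℂ) • T 1 3 5 + (8:ℂ) • T 2 3 4 := by rw [pow_zero, Module.End.one_apply, up0]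
  have up1 : (D ^ 1) u = (-3:ℂ) • T 0 3 5 + (5:ℂ) • T 1 2 5 + (3:ℂ) • T 1 3 4 := by
    rw [pow_succ', Module.End.mul_apply, pow_zero, Module.End.one_apply, up0]; simp only [map_add, map_smul, dd]; module
  have up2 : (D ^ 2) u = (2:ℂ) • T 0 2 5 + (6:ℂ) • T 0 3 4 + (-2:ℂ) • T 1 2 4 := by
    rw [pow_succ', Module.End.mul_apply, up1]; simp only [map_add, map_smul, dd]; module
  have up3 : (D ^ 3) u = (2:ℂ) • T 0 1 5 + (2:ℂ) • T 0 2 4 + (2:ℂ) • T 1 2 3 := by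
    rw [pow_succ', Module.End.mul_apply, up2]; simp only [map_add, map_smul, dd]; module
  have up4 : (D ^ 4) u = 0 := by
    rw [pow_succ', Module.End.mul_apply, up3]; simp only [map_add, map_smul, dd]; module
  refine jordan D L hU v u ?_ ?_ vp10 up4 ?_
    ![T 0 1 4, T 0 1 5, -T 0 2 5, -T 0 3 5, T 0 4 5, T 1 4 5] ?_ W hW
  · intro i hi
    interval_cases i <;> simp only [vq0, vp1, vp2, vp3, vp4, vp5, vp6, vp7, vp8, vp9, map_add, map_smul, ll] <;> module
  · intro i hi
    interval_cases i <;> simp only [uq0, up1, up2, up3, map_add, map_smul, ll] <;> module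
  · intro a b hab
    rw [vp9, up3] at hab
    have h := congrArg c hab
    simp only [map_add, map_smul, map_zero, hT] at h
    rw [Fintype.linearIndependent_iff] at i3
    have h' := i3 ![-42 * a, 2 * b, 2 * b, 2 * b] (by
      simp [Fin.sum_univ_succ]
      rw [← h]; module)
    have h0 := h' 0
    have h1 := h' 1
    simp at h0 h1
    exact ⟨h0, h1⟩
  · refine li_congr i5 ?_
    intro i
    fin_cases i <;> simp [ll, mul_assoc]

open ExteriorAlgebra in
theorem mono_basis {n : ℕ} (f : Fin n ↪o Fin 6) :
    ιMulti ℂ n (fun i => (Pi.single (f i) 1 : Fin 6 → ℂ)) =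
      (Pi.basisFun ℂ (Fin 6)).ExteriorAlgebra (Set.powersetCard.ofFinEmbEquiv f : Finset (Fin 6)) := by
  rw [basis_apply_powersetCard, ιMulti_family]
  congr 1
  funext i
  simp

open ExteriorAlgebra in
theorem indep_of {n m : ℕ} (f : Fin m → (Fin n → Fin 6)) (hf : ∀ i, StrictMono (f i))
    (hinj : ∀ i j, Finset.univ.image (f i) = Finset.univ.image (f j) → i = j) :
    LinearIndependent ℂ (fun i => ιMulti ℂ n (fun k => (Pi.single (f i k) 1 : Fin 6 → ℂ))) := by
  have h : (fun i => ιMulti ℂ n (fun k => (Pi.single (f i k) 1 : Fin 6 → ℂ))) =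
      (Pi.basisFun ℂ (Fin 6)).ExteriorAlgebra ∘ (fun i =>
        (Set.powersetCard.ofFinEmbEquiv (OrderEmbedding.ofStrictMono (f i) (hf i)) : Finset (Fin 6))) := by
    funext i
    exact mono_basis (OrderEmbedding.ofStrictMono (f i) (hf i))
  rw [h]
  apply (Module.Basis.linearIndependent _).comp
  intro i j hij
  apply hinj
  ext a
  have h2 : a ∈ (Set.powersetCard.ofFinEmbEquiv (OrderEmbedding.ofStrictMono (f i) (hf i)) :
      Finset (Fin 6)) ↔ a ∈ (Set.powersetCard.ofFinEmbEquiv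
        (OrderEmbedding.ofStrictMono (f j) (hf j)) : Finset (Fin 6)) := by
    simp only at hij
    rw [hij]
  rw [Set.powersetCard.mem_coe_iff, Set.powersetCard.mem_coe_iff,
    Set.powersetCard.mem_ofFinEmbEquiv_iff_mem_range,
    Set.powersetCard.mem_ofFinEmbEquiv_iff_mem_range] at h2
  simpa using h2

open ExteriorAlgebra in
/-- Genus 9, regular nilpotent orbit `O_{[6]}`: the representative `X_{[6]}` of `sp₆` acts on
the 14-dimensional module `∧^⟨3⟩ℂ⁶ = ker(w ∧ ·) ⊆ ⋀³ℂ⁶` as a nilpotent operator of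
Jordan type `(10, 4)`. -/
theorem genus9_jordan_type_regular_orbit
    (e : Fin 6 → (Fin 6 → ℂ)) (he : e = fun i => Pi.single i 1)
    (w : ExteriorAlgebra ℂ (Fin 6 → ℂ))
    (hw : w = ι ℂ (e 0) * ι ℂ (e 5) + ι ℂ (e 1) * ι ℂ (e 4) + ι ℂ (e 2) * ι ℂ (e 3))
    (W : Submodule ℂ (⋀[ℂ]^3 (Fin 6 → ℂ)))
    (hWdef : W = LinearMap.ker
      ((LinearMap.mulLeft ℂ w).comp (Submodule.subtype (⋀[ℂ]^3 (Fin 6 → ℂ)))))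
    (X : Module.End ℂ (Fin 6 → ℂ))
    (hX0 : X (e 0) = 0) (hX1 : X (e 1) = e 0) (hX2 : X (e 2) = e 1)
    (hX3 : X (e 3) = e 2) (hX4 : X (e 4) = -e 3) (hX5 : X (e 5) = -e 4)
    (D : Module.End ℂ (⋀[ℂ]^3 (Fin 6 → ℂ)))
    (hD : ∀ v : Fin 3 → (Fin 6 → ℂ),
      (D ⟨ιMulti ℂ 3 v, ιMulti_range ℂ 3 ⟨v, rfl⟩⟩ : ⋀[ℂ]^3 (Fin 6 → ℂ)) =
        ∑ i : Fin 3, ιMulti ℂ 3 (Function.update v i (X (v i)))) :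
    Module.finrank ℂ W = 14 ∧
      ∃ hinv : ∀ x ∈ W, D x ∈ W,
        IsNilpotent (D.restrict hinv) ∧
          ∀ p : ℕ, Module.finrank ℂ (LinearMap.ker ((D.restrict hinv) ^ p)) =
            min p 10 + min p 4 := by
  subst he
  have hsq : ∀ v : Fin 6 → ℂ, ι ℂ v * ι ℂ v = 0 := fun v => ι_sq_zero v
  have hanti : ∀ v u : Fin 6 → ℂ, ι ℂ v * ι ℂ u = -(ι ℂ u * ι ℂ v) := fun v u =>
    eq_neg_of_add_eq_zero_left (ι_add_mul_swap v u)
  have hi3 := indep_of (![![0, 1, 2], ![0, 1, 5], ![0, 2, 4], ![1, 2, 3]] : Fin 4 → Fin 3 → Fin 6)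
    (by decide) (by decide)
  have hi5 := indep_of (![![0, 1, 2, 3, 4], ![0, 1, 2, 3, 5], ![0, 1, 2, 4, 5], ![0, 1, 3, 4, 5],
    ![0, 2, 3, 4, 5], ![1, 2, 3, 4, 5]] : Fin 6 → Fin 5 → Fin 6)
    (by decide) (by decide)
  refine core (A := ExteriorAlgebra ℂ (Fin 6 → ℂ)) (Submodule.subtype (⋀[ℂ]^3 (Fin 6 → ℂ)))
    (Submodule.injective_subtype _) ?_ (fun i => ι ℂ (Pi.single i 1 : Fin 6 → ℂ))
    (fun i => ι ℂ (X (Pi.single i 1))) (fun i => hsq _) (fun i j => hanti _ _)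
    ?_ ?_ ?_ ?_ ?_ ?_
    (fun i j k => ⟨ιMulti ℂ 3 ![Pi.single i 1, Pi.single j 1, Pi.single k 1],
      ιMulti_range ℂ 3 ⟨_, rfl⟩⟩) ?_ D ?_ _ ?_ ?_ ?_ W hWdef
  · rw [exteriorPower.finrank_eq]
    simp
    decide
  · simp only at hX0; simp [hX0]
  · simp only at hX1; simp [hX1]
  · simp only at hX2; simp [hX2]
  · simp only at hX3; simp [hX3]
  · simp only at hX4; simp [hX4]
  · simp only at hX5; simp [hX5]
  · intro i j k
    simp [ιMulti_apply, mul_assoc]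
  · intro i j k
    refine (hD _).trans ?_
    rw [Fin.sum_univ_three]
    simp [ιMulti_apply, mul_assoc, upd0, upd1, upd2]
  · intro z
    simp [hw]
  · refine li_congr hi3 ?_
    intro i
    fin_cases i <;> simp [ιMulti_apply, mul_assoc] <;> rfl
  · refine li_congr hi5 ?_
    intro i
    fin_cases i <;> simp [ιMulti_apply, mul_assoc] <;> rfl
end

section
/- Let V = ℂ⁶ with basis e₁, …, e₆, let w = e₁∧e₆ + e₂∧e₅ + e₃∧e₄ ∈ ⋀²V, and let W ⊆ ⋀³V be the kernel of the linear map ⋀³V → ⋀⁵V given by α ↦ w ∧ α. Let X be the endomorphism of V with X e₄ = e₃, X e₅ = e₂, X e₆ = e₁, and X e₁ = X e₂ = X e₃ = 0, and let D_X be the derivation extension of X to ⋀³V. Then W has dimension 14, D_X(W) ⊆ W, and the restriction Z of D_X to W is nilpotent with Jordan type (4, 2, 2, 2, 2, 2), i.e. dim ker(Z^p) = min(p,4) + 5·min(p,2) for all p ≥ 0. -/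
set_option synthInstance.maxHeartbeats 4000000
set_option maxHeartbeats 1000000
set_option maxSynthPendingDepth 3

def gIdx3 : Fin 20 → Fin 3 → Fin 6 := ![![0, 1, 2], ![0, 1, 3], ![0, 1, 4], ![0, 1, 5], ![0, 2, 3], ![0, 2, 4], ![0, 2, 5], ![0, 3, 4], ![0, 3, 5], ![0, 4, 5], ![1, 2, 3], ![1, 2, 4], ![1, 2, 5], ![1, 3, 4], ![1, 3, 5], ![1, 4, 5], ![2, 3, 4], ![2, 3, 5], ![2, 4, 5], ![3, 4, 5]]

def gIdx5 : Fin 6 → Fin 5 → Fin 6 := ![![0, 1, 2, 3, 4], ![0, 1, 2, 3, 5], ![0, 1, 2, 4, 5], ![0, 1, 3, 4, 5], ![0, 2, 3, 4, 5], ![1, 2, 3, 4, 5]]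

noncomputable def gC (y : Fin 14 → ℂ) : Fin 20 → ℂ := ![(6) * y 0,
    (2) * y 1 + (1) * y 6,
    (1) * y 8,
    (-1) * y 10,
    (-1) * y 8,
    (-2) * y 1 + (-1) * y 4 + (1) * y 6,
    (-1) * y 12,
    (-1) * y 2 + (-1) * y 5,
    (-1) * y 13,
    (-1) * y 11,
    (-1) * y 10,
    (1) * y 12,
    (2) * y 1 + (-1) * y 4,
    (1) * y 13,
    (1) * y 2 + (-1) * y 5 + (1) * y 7,
    (1) * y 9,
    (-1) * y 11,
    (-1) * y 9,
    (-1) * y 2 + (1) * y 7,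
    (-1) * y 3]

noncomputable def gR (x : Fin 20 → ℂ) : Fin 14 → ℂ := ![(1/6) * x 0,
    (1/6) * x 1 + (-1/6) * x 5 + (1/6) * x 12,
    (-1/3) * x 7 + (1/3) * x 14 + (-1/3) * x 18,
    (-1) * x 19,
    (1/3) * x 1 + (-1/3) * x 5 + (-2/3) * x 12,
    (-2/3) * x 7 + (-1/3) * x 14 + (1/3) * x 18,
    (2/3) * x 1 + (1/3) * x 5 + (-1/3) * x 12,
    (-1/3) * x 7 + (1/3) * x 14 + (2/3) * x 18,
    (1) * x 2,
    (1) * x 15,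
    (-1) * x 3,
    (-1) * x 9,
    (-1) * x 6,
    (-1) * x 8]

noncomputable def gd (x : Fin 20 → ℂ) : Fin 20 → ℂ := ![(1) * x 1 + (-1) * x 5 + (1) * x 12,
    (-1) * x 7 + (1) * x 14,
    (1) * x 15,
    (1) * x 9,
    (1) * x 17,
    (1) * x 7 + (1) * x 18,
    (1) * x 8,
    (1) * x 19,
    0,
    0,
    (1) * x 16,
    (1) * x 13,
    (1) * x 14 + (-1) * x 18,
    0,
    (-1) * x 19,
    0,
    0,
    0,
    (1) * x 19,
    0]

noncomputable def gL (x : Fin 20 → ℂ) : Fin 6 → ℂ := ![(1) * x 2 + (1) * x 4,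
    (1) * x 3 + (-1) * x 10,
    (-1) * x 6 + (-1) * x 11,
    (-1) * x 8 + (-1) * x 13,
    (1) * x 9 + (-1) * x 16,
    (1) * x 15 + (1) * x 17]

def gN (y : Fin 14 → ℂ) : Fin 14 → ℂ := ![y 1, y 2, y 3, 0, y 5, 0, y 7, 0, y 9, 0, y 11, 0, y 13, 0]

theorem gR_gC (y : Fin 14 → ℂ) : gR (gC y) = y := by
  ext i; fin_cases i <;> simp [gR, gC] <;> ring

theorem gC_gR (x : Fin 20 → ℂ) (h : gL x = 0) : gC (gR x) = x := by
  have h0 := congrFun h 0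
  have h1 := congrFun h 1
  have h2 := congrFun h 2
  have h3 := congrFun h 3
  have h4 := congrFun h 4
  have h5 := congrFun h 5
  simp [gL] at h0 h1 h2 h3 h4 h5
  ext i; fin_cases i <;> simp [gR, gC] <;> grind

theorem gL_gC (y : Fin 14 → ℂ) : gL (gC y) = 0 := by
  ext i; fin_cases i <;> simp [gL, gC] <;> ring

theorem gd_gC (y : Fin 14 → ℂ) : gd (gC y) = gC (gN y) := by
  ext i; fin_cases i <;> simp [gd, gC, gN] <;> ring

noncomputable def gClin : (Fin 14 → ℂ) →ₗ[ℂ] (Fin 20 → ℂ) where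
  toFun := gC
  map_add' x y := by ext i; fin_cases i <;> simp [gC] <;> ring
  map_smul' c y := by ext i; fin_cases i <;> simp [gC] <;> ring

def gNlin : (Fin 14 → ℂ) →ₗ[ℂ] (Fin 14 → ℂ) where
  toFun := gN
  map_add' x y := by ext i; fin_cases i <;> simp [gN]
  map_smul' c y := by ext i; fin_cases i <;> simp [gN]

theorem finrank_of_vanish (K : Submodule ℂ (Fin 14 → ℂ)) (S : Finset (Fin 14))
    (h : ∀ y, y ∈ K ↔ ∀ i ∈ S, y i = 0) : Module.finrank ℂ K = 14 - S.card := by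
  have hK : K = LinearMap.ker (LinearMap.funLeft ℂ ℂ (fun i : S => (i : Fin 14))) := by
    ext y
    rw [h, LinearMap.mem_ker]
    simp [funext_iff, LinearMap.funLeft_apply]
  have hs : Function.Surjective (LinearMap.funLeft ℂ ℂ (fun i : S => (i : Fin 14))) :=
    LinearMap.funLeft_surjective_of_injective ℂ ℂ _ Subtype.val_injective
  have := LinearMap.finrank_range_add_finrank_ker
    (LinearMap.funLeft ℂ ℂ (fun i : S => (i : Fin 14)))
  rw [LinearMap.range_eq_top.mpr hs, finrank_top] at this
  simp at this
  rw [hK]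
  omega

theorem gN4 : gNlin ^ 4 = 0 := by
  ext j i
  simp only [pow_succ, pow_zero, one_mul, Module.End.mul_apply, LinearMap.comp_apply]
  fin_cases i <;> simp [gNlin, gN]

theorem finrank_ker_gN (p : ℕ) :
    Module.finrank ℂ (LinearMap.ker (gNlin ^ p)) = min p 4 + 5 * min p 2 := by
  by_cases hp : 4 ≤ p
  · obtain ⟨q, rfl⟩ := Nat.exists_eq_add_of_le hp
    rw [pow_add, gN4, zero_mul, LinearMap.ker_zero, finrank_top]
    simp
    omega
  · have : p = 0 ∨ p = 1 ∨ p = 2 ∨ p = 3 := by omega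
    rcases this with rfl | rfl | rfl | rfl
    · rw [finrank_of_vanish _ Finset.univ]
      · simp
      · intro y
        simp [funext_iff]
    · rw [finrank_of_vanish _ {1, 2, 3, 5, 7, 9, 11, 13}]
      · rfl
      · intro y
        simp [funext_iff, gNlin, gN, Fin.forall_fin_succ]
    · rw [finrank_of_vanish _ {2, 3}]
      · rfl
      · intro y
        simp [funext_iff, gNlin, gN, Fin.forall_fin_succ, pow_succ]
    · rw [finrank_of_vanish _ {3}]
      · rfl
      · intro y
        simp [funext_iff, gNlin, gN, Fin.forall_fin_succ, pow_succ]


section generic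
variable {A : Type*} [Ring A] [Algebra ℂ A]

def gP3 (E : Fin 6 → A) (i : Fin 20) : A := E (gIdx3 i 0) * (E (gIdx3 i 1) * E (gIdx3 i 2))

def gP5 (E : Fin 6 → A) (i : Fin 6) : A :=
  E (gIdx5 i 0) * (E (gIdx5 i 1) * (E (gIdx5 i 2) * (E (gIdx5 i 3) * E (gIdx5 i 4))))

theorem g_wmul (E : Fin 6 → A) (hsq : ∀ i, E i * E i = 0)
    (hsw : ∀ i j, j < i → E i * E j = -(E j * E i)) (x : Fin 20 → ℂ) :
    (E 0 * E 5 + E 1 * E 4 + E 2 * E 3) * ∑ i, x i • gP3 E i = ∑ k, gL x k • gP5 E k := by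
  have hsq' : ∀ i y, E i * (E i * y) = 0 := fun i y => by rw [← mul_assoc, hsq, zero_mul]
  have hsw' : ∀ i j y, j < i → E i * (E j * y) = -(E j * (E i * y)) := fun i j y h => by
    rw [← mul_assoc, hsw i j h, neg_mul, mul_assoc]
  have key : ∀ i, (E 0 * E 5 + E 1 * E 4 + E 2 * E 3) * gP3 E i =
      ∑ k, gL (Pi.single i 1) k • gP5 E k := by
    intro i
    fin_cases i <;>
    simp [gP3, gP5, gIdx3, gIdx5, gL, Fin.sum_univ_succ, add_mul, mul_assoc, hsq, hsq', hsw, hsw',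
      Pi.single_apply]
  simp only [Finset.mul_sum, mul_smul_comm, key, Finset.smul_sum, smul_smul]
  rw [Finset.sum_comm]
  simp only [← Finset.sum_smul]
  refine Finset.sum_congr rfl fun k _ => ?_
  congr 1
  fin_cases k <;> simp [gL, Fin.sum_univ_succ, Pi.single_apply] <;> ring

def gDP3 (E F : Fin 6 → A) (i : Fin 20) : A :=
  F (gIdx3 i 0) * (E (gIdx3 i 1) * E (gIdx3 i 2)) +
  E (gIdx3 i 0) * (F (gIdx3 i 1) * E (gIdx3 i 2)) +
  E (gIdx3 i 0) * (E (gIdx3 i 1) * F (gIdx3 i 2))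

set_option maxHeartbeats 2000000 in
theorem g_dmul (E F : Fin 6 → A) (hsq : ∀ i, E i * E i = 0)
    (hsw : ∀ i j, j < i → E i * E j = -(E j * E i))
    (h0 : F 0 = 0) (h1 : F 1 = 0) (h2 : F 2 = 0) (h3 : F 3 = E 2) (h4 : F 4 = E 1)
    (h5 : F 5 = E 0) (x : Fin 20 → ℂ) :
    ∑ i, x i • gDP3 E F i = ∑ k, gd x k • gP3 E k := by
  have hsq' : ∀ i y, E i * (E i * y) = 0 := fun i y => by rw [← mul_assoc, hsq, zero_mul]
  have hsw' : ∀ i j y, j < i → E i * (E j * y) = -(E j * (E i * y)) := fun i j y h => by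
    rw [← mul_assoc, hsw i j h, neg_mul, mul_assoc]
  have key : ∀ i, gDP3 E F i = ∑ k, gd (Pi.single i 1) k • gP3 E k := by
    intro i
    fin_cases i <;>
    simp [gDP3, gP3, gIdx3, gd, Fin.sum_univ_succ, hsq, hsq', hsw, hsw',
      Pi.single_apply, h0, h1, h2, h3, h4, h5] <;> try abel
  simp only [key, Finset.smul_sum, smul_smul]
  rw [Finset.sum_comm]
  simp only [← Finset.sum_smul]
  refine Finset.sum_congr rfl fun k _ => ?_
  congr 1
  fin_cases k <;> simp [gd, Fin.sum_univ_succ, Pi.single_apply] <;> ring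

end generic

section ext
open ExteriorAlgebra

theorem gLI {m n : ℕ} (idx : Fin m → Fin n → Fin 6) (hm : ∀ i, StrictMono (idx i))
    (hi : ∀ i j, Set.range (idx i) = Set.range (idx j) → i = j) :
    LinearIndependent ℂ (fun i : Fin m => (⟨ιMulti ℂ n (fun k => Pi.single (idx i k) 1),
      ιMulti_range ℂ n ⟨_, rfl⟩⟩ : ⋀[ℂ]^n (Fin 6 → ℂ))) := by
  have h := exteriorPower.ιMulti_family_linearIndependent_ofBasis ℂ n (Pi.basisFun ℂ (Fin 6))
  let g : Fin m → Set.powersetCard (Fin 6) n := fun i =>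
    Set.powersetCard.ofFinEmbEquiv (OrderEmbedding.ofStrictMono (idx i) (hm i))
  have hg : Function.Injective g := by
    intro i j hij
    have := Set.powersetCard.ofFinEmbEquiv.injective hij
    apply hi
    have h2 := congrArg (fun f : Fin n ↪o Fin 6 => Set.range f) this
    simpa using h2
  have h2 := h.comp g hg
  have hfun : (fun i : Fin m => (⟨ιMulti ℂ n (fun k => Pi.single (idx i k) 1),
      ιMulti_range ℂ n ⟨_, rfl⟩⟩ : ⋀[ℂ]^n (Fin 6 → ℂ))) =
      exteriorPower.ιMulti_family ℂ n (Pi.basisFun ℂ (Fin 6)) ∘ g := by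
    ext i
    simp [g, exteriorPower.ιMulti_family, Function.comp_def]
  rw [hfun]
  exact h2

theorem gLI3 : LinearIndependent ℂ (fun i : Fin 20 =>
    (⟨ιMulti ℂ 3 (fun k => Pi.single (gIdx3 i k) 1),
      ιMulti_range ℂ 3 ⟨_, rfl⟩⟩ : ⋀[ℂ]^3 (Fin 6 → ℂ))) := by
  apply gLI
  · intro i
    rw [Fin.strictMono_iff_lt_succ]
    revert i
    decide
  · intro i j h
    have h2 : Finset.univ.image (gIdx3 i) = Finset.univ.image (gIdx3 j) := by
      apply Finset.coe_injective
      simpa using h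
    have : Function.Injective (fun i => Finset.univ.image (gIdx3 i)) := by decide
    exact this h2

theorem gLI5 : LinearIndependent ℂ (fun k : Fin 6 =>
    gP5 (fun i => ι ℂ (Pi.single i 1 : Fin 6 → ℂ)) k) := by
  have h : LinearIndependent ℂ (fun i : Fin 6 =>
    (⟨ιMulti ℂ 5 (fun k => Pi.single (gIdx5 i k) 1),
      ιMulti_range ℂ 5 ⟨_, rfl⟩⟩ : ⋀[ℂ]^5 (Fin 6 → ℂ))) := by
    apply gLI
    · intro i
      rw [Fin.strictMono_iff_lt_succ]
      revert i
      decide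
    · intro i j h
      have h2 : Finset.univ.image (gIdx5 i) = Finset.univ.image (gIdx5 j) := by
        apply Finset.coe_injective
        simpa using h
      have : Function.Injective (fun i => Finset.univ.image (gIdx5 i)) := by decide
      exact this h2
  have h2 := h.map' (Submodule.subtype _) (Submodule.ker_subtype _)
  have hfun : (fun k : Fin 6 => gP5 (fun i => ι ℂ (Pi.single i 1 : Fin 6 → ℂ)) k) =
      (Submodule.subtype (⋀[ℂ]^5 (Fin 6 → ℂ))) ∘ (fun i : Fin 6 =>
    (⟨ιMulti ℂ 5 (fun k => Pi.single (gIdx5 i k) 1),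
      ιMulti_range ℂ 5 ⟨_, rfl⟩⟩ : ⋀[ℂ]^5 (Fin 6 → ℂ))) := by
    ext i
    simp [gP5, Matrix.vecTail]
  rw [hfun]
  exact h2

end ext

open ExteriorAlgebra in
/-- Genus 9, nilpotent orbit `O_{[2³]}`: the representative `X_{[2³]}` of `sp₆` acts on
the 14-dimensional module `∧^⟨3⟩ℂ⁶ = ker(w ∧ ·) ⊆ ⋀³ℂ⁶` as a nilpotent operator of
Jordan type `(4, 2, 2, 2, 2, 2)`. -/
theorem genus9_jordan_type_orbit_two_cubed
    (e : Fin 6 → (Fin 6 → ℂ)) (he : e = fun i => Pi.single i 1)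
    (w : ExteriorAlgebra ℂ (Fin 6 → ℂ))
    (hw : w = ι ℂ (e 0) * ι ℂ (e 5) + ι ℂ (e 1) * ι ℂ (e 4) + ι ℂ (e 2) * ι ℂ (e 3))
    (W : Submodule ℂ (⋀[ℂ]^3 (Fin 6 → ℂ)))
    (hWdef : W = LinearMap.ker
      ((LinearMap.mulLeft ℂ w).comp (Submodule.subtype (⋀[ℂ]^3 (Fin 6 → ℂ)))))
    (X : Module.End ℂ (Fin 6 → ℂ))
    (hX0 : X (e 0) = 0) (hX1 : X (e 1) = 0) (hX2 : X (e 2) = 0)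
    (hX3 : X (e 3) = e 2) (hX4 : X (e 4) = e 1) (hX5 : X (e 5) = e 0)
    (D : Module.End ℂ (⋀[ℂ]^3 (Fin 6 → ℂ)))
    (hD : ∀ v : Fin 3 → (Fin 6 → ℂ),
      (D ⟨ιMulti ℂ 3 v, ιMulti_range ℂ 3 ⟨v, rfl⟩⟩ : ⋀[ℂ]^3 (Fin 6 → ℂ)) =
        ∑ i : Fin 3, ιMulti ℂ 3 (Function.update v i (X (v i)))) :
    Module.finrank ℂ W = 14 ∧
      ∃ hinv : ∀ x ∈ W, D x ∈ W,
        IsNilpotent (D.restrict hinv) ∧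
          ∀ p : ℕ, Module.finrank ℂ (LinearMap.ker ((D.restrict hinv) ^ p)) =
            min p 4 + 5 * min p 2 := by
  subst he
  have hEsq : ∀ i : Fin 6, ι ℂ (Pi.single i 1 : Fin 6 → ℂ) * ι ℂ (Pi.single i 1 : Fin 6 → ℂ) = 0 :=
    fun i => ι_sq_zero _
  have hEsw : ∀ i j : Fin 6, j < i →
      ι ℂ (Pi.single i 1 : Fin 6 → ℂ) * ι ℂ (Pi.single j 1 : Fin 6 → ℂ) =
      -(ι ℂ (Pi.single j 1 : Fin 6 → ℂ) * ι ℂ (Pi.single i 1 : Fin 6 → ℂ)) :=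
    fun i j _ => eq_neg_of_add_eq_zero_left (ι_add_mul_swap _ _)
  -- the standard basis
  have hcard : Fintype.card (Fin 20) = Module.finrank ℂ (⋀[ℂ]^3 (Fin 6 → ℂ)) := by
    rw [exteriorPower.finrank_eq]
    simp
    rfl
  let T := basisOfLinearIndependentOfCardEqFinrank gLI3 hcard
  have hTc : ∀ i, (T i : ExteriorAlgebra ℂ (Fin 6 → ℂ)) =
      gP3 (fun i => ι ℂ (Pi.single i 1 : Fin 6 → ℂ)) i := by
    intro i
    simp [T, gP3, Matrix.vecTail]
  have hDc : ∀ i, (D (T i) : ExteriorAlgebra ℂ (Fin 6 → ℂ)) =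
      gDP3 (fun i => ι ℂ (Pi.single i 1 : Fin 6 → ℂ))
        (fun i => ι ℂ (X (Pi.single i 1 : Fin 6 → ℂ))) i := by
    intro i
    have := hD (fun k => Pi.single (gIdx3 i k) 1)
    simp only [T, coe_basisOfLinearIndependentOfCardEqFinrank]
    rw [this, Fin.sum_univ_three]
    simp [gDP3, Matrix.vecTail]
  have hPc : ∀ x : Fin 20 → ℂ, (T.equivFun.symm x : ExteriorAlgebra ℂ (Fin 6 → ℂ)) =
      ∑ i, x i • gP3 (fun i => ι ℂ (Pi.single i 1 : Fin 6 → ℂ)) i := by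
    intro x
    rw [Module.Basis.equivFun_symm_apply]
    simp [hTc]
  have hDP : ∀ x : Fin 20 → ℂ, D (T.equivFun.symm x) = T.equivFun.symm (gd x) := by
    intro x
    apply Subtype.ext
    rw [hPc, ← g_dmul _ (fun i => ι ℂ (X (Pi.single i 1 : Fin 6 → ℂ))) hEsq hEsw
      (by simp [hX0]) (by simp [hX1]) (by simp [hX2]) (by simp [hX3]) (by simp [hX4])
      (by simp [hX5]), Module.Basis.equivFun_symm_apply]
    simp [hDc]
  have hW : ∀ x : Fin 20 → ℂ, T.equivFun.symm x ∈ W ↔ gL x = 0 := by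
    intro x
    rw [hWdef, LinearMap.mem_ker, LinearMap.comp_apply, LinearMap.mulLeft_apply,
      Submodule.subtype_apply, hPc, hw, g_wmul (fun i => ι ℂ (Pi.single i 1 : Fin 6 → ℂ)) hEsq hEsw]
    constructor
    · intro h
      have h5 := gLI5
      rw [Fintype.linearIndependent_iff] at h5
      ext k
      exact h5 _ h k
    · intro h
      simp [h]
  -- the parametrization of `W`
  let Ψ : (Fin 14 → ℂ) →ₗ[ℂ] (⋀[ℂ]^3 (Fin 6 → ℂ)) := T.equivFun.symm.toLinearMap ∘ₗ gClin
  have hΨ : ∀ y, Ψ y = T.equivFun.symm (gC y) := fun y => rfl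
  have hΨW : ∀ y, Ψ y ∈ W := fun y => by rw [hΨ, hW, gL_gC]
  have hbij : Function.Bijective (Ψ.codRestrict W hΨW) := by
    constructor
    · intro y z hyz
      have h1 : Ψ y = Ψ z := congrArg Subtype.val hyz
      rw [hΨ, hΨ] at h1
      have h2 := congrArg gR (T.equivFun.symm.injective h1)
      rwa [gR_gC, gR_gC] at h2
    · rintro ⟨α, hα⟩
      refine ⟨gR (T.equivFun α), Subtype.ext ?_⟩
      change Ψ _ = α
      rw [hΨ, gC_gR, LinearEquiv.symm_apply_apply]
      rw [← hW, LinearEquiv.symm_apply_apply]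
      exact hα
  let Φ := LinearEquiv.ofBijective _ hbij
  have hDΨ : ∀ y, D (Ψ y) = Ψ (gNlin y) := by
    intro y
    rw [hΨ, hDP, gd_gC]
    rfl
  have hinv : ∀ x ∈ W, D x ∈ W := by
    intro x hx
    obtain ⟨y, hy⟩ := hbij.2 ⟨x, hx⟩
    have h1 : Ψ y = x := congrArg Subtype.val hy
    rw [← h1, hDΨ]
    exact hΨW _
  have hZ : ∀ y, D.restrict hinv (Φ y) = Φ (gNlin y) := fun y => Subtype.ext (hDΨ y)
  have hZp : ∀ (p : ℕ) y, (D.restrict hinv ^ p) (Φ y) = Φ ((gNlin ^ p) y) := by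
    intro p
    induction p with
    | zero => intro y; simp
    | succ p ih => intro y; rw [pow_succ, pow_succ, Module.End.mul_apply, Module.End.mul_apply, hZ, ih]
  refine ⟨?_, hinv, ⟨4, ?_⟩, fun p => ?_⟩
  · rw [← Φ.finrank_eq]
    simp
  · apply LinearMap.ext
    intro x
    obtain ⟨y, rfl⟩ := Φ.surjective x
    rw [hZp, gN4]
    simp
  · have hk : LinearMap.ker (D.restrict hinv ^ p) =
        (LinearMap.ker (gNlin ^ p)).map (Φ : (Fin 14 → ℂ) →ₗ[ℂ] W) := by
      ext x
      obtain ⟨y, rfl⟩ := Φ.surjective x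
      rw [LinearMap.mem_ker, hZp]
      simp
    rw [← finrank_ker_gN p, ← LinearEquiv.finrank_map_eq Φ, hk]
end

section
/- Let V = ℂ⁶ with basis e₁, e₂, e₃, f₁, f₂, f₃, and for x, y₁, y₂, y₃ ∈ ℂ define the elements of ⋀³V: p = x·e₁∧e₂∧e₃ + y₁·e₁∧f₂∧f₃ + y₂·f₁∧e₂∧f₃ + y₃·f₁∧f₂∧e₃ and p' = x·f₁∧f₂∧f₃ + y₁·f₁∧e₂∧e₃ + y₂·e₁∧f₂∧e₃ + y₃·e₁∧e₂∧f₃. Let t be the linear automorphism of V with t(e_j) = f_j and t(f_j) = −e_j for j = 1, 2, 3, and let s be the linear automorphism with s(e_j) = i·e_j and s(f_j) = −i·f_j, where i² = −1. Then (⋀³t)(p) = p', (⋀³t)(p') = −p, (⋀³s)(p) = −i·p, and (⋀³s)(p') = i·p'. In particular the subspace of ⋀³V spanned by p and p' is invariant under both ⋀³s and ⋀³t. -/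
open ExteriorAlgebra in
/-- Genus 9 (Proposition 5.3, constructive step): the symplectic anti-involutions
`s = i(Id_E − Id_F)` and `t` (with `t e_j = f_j`, `t f_j = −e_j`) act on the elements
`p, p'` of `⋀³ℂ⁶` by `(⋀³t)(p) = p'`, `(⋀³t)(p') = −p`, `(⋀³s)(p) = −i·p`,
`(⋀³s)(p') = i·p'`; in particular the span of `p, p'` is invariant under `⋀³s` and `⋀³t`. -/
theorem genus9_action_on_p_pprime
    (e f : Fin 3 → (Fin 6 → ℂ))
    (he : ∀ j : Fin 3, e j = Pi.single (Fin.castLE (by norm_num) j) 1)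
    (hf : ∀ j : Fin 3, f j = Pi.single (Fin.castLE (by norm_num) j + 3) 1)
    (x y₁ y₂ y₃ : ℂ)
    (p p' : ExteriorAlgebra ℂ (Fin 6 → ℂ))
    (hp : p = x • (ι ℂ (e 0) * ι ℂ (e 1) * ι ℂ (e 2)) +
        y₁ • (ι ℂ (e 0) * ι ℂ (f 1) * ι ℂ (f 2)) +
        y₂ • (ι ℂ (f 0) * ι ℂ (e 1) * ι ℂ (f 2)) +
        y₃ • (ι ℂ (f 0) * ι ℂ (f 1) * ι ℂ (e 2)))
    (hp' : p' = x • (ι ℂ (f 0) * ι ℂ (f 1) * ι ℂ (f 2)) +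
        y₁ • (ι ℂ (f 0) * ι ℂ (e 1) * ι ℂ (e 2)) +
        y₂ • (ι ℂ (e 0) * ι ℂ (f 1) * ι ℂ (e 2)) +
        y₃ • (ι ℂ (e 0) * ι ℂ (e 1) * ι ℂ (f 2)))
    (t s : Module.End ℂ (Fin 6 → ℂ))
    (ht : ∀ j : Fin 3, t (e j) = f j ∧ t (f j) = -e j)
    (hs : ∀ j : Fin 3, s (e j) = Complex.I • e j ∧ s (f j) = -(Complex.I • f j)) :
    ExteriorAlgebra.map t p = p' ∧
    ExteriorAlgebra.map t p' = -p ∧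
    ExteriorAlgebra.map s p = -(Complex.I • p) ∧
    ExteriorAlgebra.map s p' = Complex.I • p' ∧
    Submodule.map (ExteriorAlgebra.map s).toLinearMap (Submodule.span ℂ {p, p'}) ≤
      Submodule.span ℂ {p, p'} ∧
    Submodule.map (ExteriorAlgebra.map t).toLinearMap (Submodule.span ℂ {p, p'}) ≤
      Submodule.span ℂ {p, p'} := by
  have te := fun j => (ht j).1
  have tf := fun j => (ht j).2
  have se := fun j => (hs j).1
  have sf := fun j => (hs j).2
  have hI : Complex.I * Complex.I = -1 := Complex.I_mul_I
  have h1 : ExteriorAlgebra.map t p = p' := by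
    rw [hp, hp']
    simp only [map_add, map_smul, map_mul, ExteriorAlgebra.map_apply_ι, te, tf, map_neg,
      neg_mul, mul_neg, neg_neg]
  have h2 : ExteriorAlgebra.map t p' = -p := by
    rw [hp, hp']
    simp only [map_add, map_smul, map_mul, ExteriorAlgebra.map_apply_ι, te, tf, map_neg,
      neg_mul, mul_neg, neg_neg, smul_neg, neg_add]
  have h3 : ExteriorAlgebra.map s p = -(Complex.I • p) := by
    rw [hp]
    simp only [map_add, map_smul, map_mul, ExteriorAlgebra.map_apply_ι, se, sf, map_neg,
      neg_mul, mul_neg, neg_neg, smul_neg, smul_mul_assoc, mul_smul_comm, smul_smul, smul_add, hI,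
      mul_one, neg_add, ← neg_smul, mul_comm _ Complex.I]
  have h4 : ExteriorAlgebra.map s p' = Complex.I • p' := by
    rw [hp']
    simp only [map_add, map_smul, map_mul, ExteriorAlgebra.map_apply_ι, se, sf, map_neg,
      neg_mul, mul_neg, neg_neg, smul_neg, smul_mul_assoc, mul_smul_comm, smul_smul, smul_add, hI,
      mul_one, neg_add, ← neg_smul, mul_comm _ Complex.I]
  have mp : p ∈ Submodule.span ℂ {p, p'} := Submodule.subset_span (by simp)
  have mp' : p' ∈ Submodule.span ℂ {p, p'} := Submodule.subset_span (by simp)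
  refine ⟨h1, h2, h3, h4, ?_, ?_⟩
  · rw [Submodule.map_span_le]
    rintro m (rfl | rfl)
    · rw [AlgHom.toLinearMap_apply, h3]
      exact Submodule.neg_mem _ (Submodule.smul_mem _ _ mp)
    · rw [AlgHom.toLinearMap_apply, h4]
      exact Submodule.smul_mem _ _ mp'
  · rw [Submodule.map_span_le]
    rintro m (rfl | rfl)
    · rw [AlgHom.toLinearMap_apply, h1]
      exact mp'
    · rw [AlgHom.toLinearMap_apply, h2]
      exact Submodule.neg_mem _ mp
end
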